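/- arXiv:2603.17344 — 7 statements merged into one kernel-verified Lean document; each statement's English description precedes it below -/
import Mathlib

section
/- Suppose Assumption 1 holds for a Borel probability measure P on ℝ^m with support Ξ, tail index α > 0, scale function q and directional function λ, and suppose Assumption 2 holds for X ⊆ ℝ^n, the same closed cone Ξ, a function g : X × Ξ → ℝ, exponents (γ, ρ), and limit function g*. Fix s ≥ 1. Let (x_ε)_{ε∈(0,1)} be a family of points of X such that s^{−γ} x_ε ∈ X for every ε, and suppose there exists ε₀ ∈ (0,1) such that P({z ∈ ℝ^m : g(s^{−γ} x_ε, z) > 0}) ≤ ε^{1/s^α} for all ε ∈ (0, ε₀). Define the violation probability V(x) := P({z ∈ ℝ^m : g(x, z) > 0}) for x ∈ X. Then liminf_{ε→0⁺} log V(x_ε) / log ε ≥ 1, with the convention log 0 = −∞ (so the ratio is +∞ whenever V(x_ε) = 0, since log ε < 0). -/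
open Filter Topology MeasureTheory Set

noncomputable section

/-- Euclidean space `ℝ^d`. -/
abbrev Rn (d : ℕ) : Type := EuclideanSpace ℝ (Fin d)

/-- A set is a cone: closed under multiplication by positive scalars. -/
def IsPosCone {d : ℕ} (Z : Set (Rn d)) : Prop :=
  ∀ c : ℝ, 0 < c → ∀ z ∈ Z, c • z ∈ Z

/-- `f : (0,∞) → (0,∞)` is regularly varying with index `κ`:
`f(uz)/f(u) → z^κ` as `u → ∞`, for every `z > 0`. -/
def RegVary (f : ℝ → ℝ) (κ : ℝ) : Prop :=
  (∀ u : ℝ, 0 < u → 0 < f u) ∧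
  ∀ z : ℝ, 0 < z → Tendsto (fun u : ℝ => f (u * z) / f u) atTop (𝓝 (z ^ κ))

/-- `f ∈ MRV(Z, h, f*)` (multivariate regular variation on the cone `Z`), except
for the requirement `h ∈ RV(κ)` which is stated separately: `f, f* : Z → [0,∞)`,
`f*` continuous on `Z`, and `f(u • z_u)/h(u) → f*(z)` whenever `z_u → z` in `Z`. -/
def MultiRegVary {d : ℕ} (Z : Set (Rn d)) (f : Rn d → ℝ) (h : ℝ → ℝ)
    (fstar : Rn d → ℝ) : Prop :=
  (∀ z ∈ Z, 0 ≤ f z) ∧ (∀ z ∈ Z, 0 ≤ fstar z) ∧ ContinuousOn fstar Z ∧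
  ∀ z ∈ Z, ∀ zu : ℝ → Rn d, (∀ u : ℝ, 0 < u → zu u ∈ Z) →
    Tendsto zu atTop (𝓝 z) →
    Tendsto (fun u : ℝ => f (u • zu u) / h u) atTop (𝓝 (fstar z))

/-- The asymptotic cone `A^∞_θ` of a set `A` with rate `θ`. -/
def asymCone {d : ℕ} (A : Set (Rn d)) (θ : ℝ) : Set (Rn d) :=
  {y | ∃ a : ℕ → Rn d, ∃ lamk : ℕ → ℝ,
    (∀ k, a k ∈ A) ∧ (∀ k, 0 < lamk k) ∧ Tendsto lamk atTop atTop ∧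
    Tendsto (fun k => (lamk k ^ θ)⁻¹ • a k) atTop (𝓝 y)}

/-- Assumption 1: `P` is a Borel probability measure on `ℝ^m` whose support is the
nonempty closed cone `Ξ`, with density `exp (-Q z)` on `Ξ` (and `0` outside) w.r.t.
Lebesgue measure, `Q ∈ MRV(Ξ, q, lam)` with `q ∈ RV(α)`, `α > 0`, and `lam > 0`
on unit vectors of `Ξ`. -/
def Assumption1 {d : ℕ} (P : Measure (Rn d)) (Ξ : Set (Rn d))
    (Q : Rn d → ℝ) (q : ℝ → ℝ) (lam : Rn d → ℝ) (α : ℝ) : Prop :=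
  IsProbabilityMeasure P ∧
  Ξ.Nonempty ∧ IsClosed Ξ ∧ IsPosCone Ξ ∧
  -- Ξ is the support of P: the smallest closed set of full measure
  P Ξ = 1 ∧ (∀ C : Set (Rn d), IsClosed C → P C = 1 → Ξ ⊆ C) ∧
  -- density of P w.r.t. Lebesgue measure
  P = volume.withDensity
    (fun z => ENNReal.ofReal (Ξ.indicator (fun z' => Real.exp (-(Q z'))) z)) ∧
  0 < α ∧ RegVary q α ∧ MultiRegVary Ξ Q q lam ∧
  (∀ z ∈ Ξ, ‖z‖ = 1 → 0 < lam z)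

/-- Condition (A1): `gs` is a continuous limit function on `X^∞_γ × Ξ` and
`g(x_u, z_u)/u^ρ → gs(y, w)` along all admissible families. -/
def CondA1 {n m : ℕ} (X : Set (Rn n)) (Ξ : Set (Rn m)) (g : Rn n → Rn m → ℝ)
    (γ ρ : ℝ) (gs : Rn n → Rn m → ℝ) : Prop :=
  ContinuousOn (fun p : Rn n × Rn m => gs p.1 p.2) ((asymCone X γ) ×ˢ Ξ) ∧
  ∀ y ∈ asymCone X γ, ∀ w ∈ Ξ, ∀ xu : ℝ → Rn n, ∀ zu : ℝ → Rn m,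
    (∀ u : ℝ, 0 < u → xu u ∈ X) → (∀ u : ℝ, 0 < u → zu u ∈ Ξ) →
    Tendsto (fun u : ℝ => (u ^ γ)⁻¹ • xu u) atTop (𝓝 y) →
    Tendsto (fun u : ℝ => u⁻¹ • zu u) atTop (𝓝 w) →
    Tendsto (fun u : ℝ => g (xu u) (zu u) / u ^ ρ) atTop (𝓝 (gs y w))

/-- Condition (A2): `X^∞_γ \ {0} ≠ ∅`. -/
def CondA2 {n : ℕ} (X : Set (Rn n)) (γ : ℝ) : Prop :=
  (asymCone X γ \ {0}).Nonempty

/-- Condition (A3): `gs(y, 0) < 0` for all `y ∈ X^∞_γ \ {0}`. -/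
def CondA3 {n m : ℕ} (X : Set (Rn n)) (γ : ℝ) (gs : Rn n → Rn m → ℝ) : Prop :=
  ∀ y ∈ asymCone X γ \ {0}, gs y 0 < 0

/-- Condition (A4): every `y ∈ X^∞_γ \ {0}` admits `w ∈ Ξ` with `gs(y, w) > 0`. -/
def CondA4 {n m : ℕ} (X : Set (Rn n)) (Ξ : Set (Rn m)) (γ : ℝ)
    (gs : Rn n → Rn m → ℝ) : Prop :=
  ∀ y ∈ asymCone X γ \ {0}, ∃ w ∈ Ξ, 0 < gs y w

/-- Condition (A5): if `γ < 0` then `g(0, z) ≤ 0` for all `z ∈ Ξ`. -/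
def CondA5 {n m : ℕ} (Ξ : Set (Rn m)) (g : Rn n → Rn m → ℝ) (γ : ℝ) : Prop :=
  γ < 0 → ∀ z ∈ Ξ, g 0 z ≤ 0

/-- Regularity preconditions of Assumption 2: `X` nonempty closed convex, `Ξ` a
nonempty closed cone, `g(·, z)` convex and lower semicontinuous on `X` for each
`z ∈ Ξ`, and `g(x, ·)` continuous on `Ξ` for each `x ∈ X`. -/
def GRegular {n m : ℕ} (X : Set (Rn n)) (Ξ : Set (Rn m))
    (g : Rn n → Rn m → ℝ) : Prop :=
  X.Nonempty ∧ IsClosed X ∧ Convex ℝ X ∧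
  Ξ.Nonempty ∧ IsClosed Ξ ∧ IsPosCone Ξ ∧
  (∀ z ∈ Ξ, ConvexOn ℝ X (fun x => g x z)) ∧
  (∀ z ∈ Ξ, LowerSemicontinuousOn (fun x => g x z) X) ∧
  (∀ x ∈ X, ContinuousOn (fun z => g x z) Ξ)

/-- Assumption 2: the regularity preconditions together with conditions (A1)–(A5)
for exponents `(γ, ρ)` with `γ ≠ 0`, `ρ ≥ 0`, and limit function `gs`. -/
def Assumption2 {n m : ℕ} (X : Set (Rn n)) (Ξ : Set (Rn m)) (g : Rn n → Rn m → ℝ)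
    (γ ρ : ℝ) (gs : Rn n → Rn m → ℝ) : Prop :=
  GRegular X Ξ g ∧ γ ≠ 0 ∧ 0 ≤ ρ ∧
  CondA1 X Ξ g γ ρ gs ∧ CondA2 X γ ∧ CondA3 X γ gs ∧ CondA4 X Ξ γ gs ∧
  CondA5 Ξ g γ


lemma extend_tendsto {A B : Type*} {u : ℕ → ℝ} (hu : StrictMono u) (a : ℕ → A) (b : ℝ → A)
    (F : ℝ → A → B) (l : Filter B) (h1 : Tendsto (fun k => F (u k) (a k)) atTop l)
    (h2 : Tendsto (fun v => F v (b v)) atTop l) :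
    Tendsto (fun v => F v (Function.extend u a b v)) atTop l := by
  intro S hS
  obtain ⟨K, hK⟩ := mem_atTop_sets.1 (h1 hS)
  obtain ⟨V, hV⟩ := mem_atTop_sets.1 (h2 hS)
  refine mem_atTop_sets.2 ⟨max V (u K), fun v hv => ?_⟩
  by_cases h : ∃ k, u k = v
  · obtain ⟨k, rfl⟩ := h
    simp only [mem_preimage, hu.injective.extend_apply]
    exact hK k (hu.le_iff_le.1 (le_trans (le_max_right _ _) hv))
  · simp only [mem_preimage, Function.extend_apply' _ _ _ h]
    exact hV v (le_trans (le_max_left _ _) hv)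

lemma mem_asymCone_of_tendsto {n : ℕ} {X : Set (Rn n)} {γ : ℝ} {u : ℕ → ℝ} {x : ℕ → Rn n}
    {y : Rn n} (hu : Tendsto u atTop atTop) (hx : ∀ k, x k ∈ X)
    (hy : Tendsto (fun k => (u k ^ γ)⁻¹ • x k) atTop (𝓝 y)) : y ∈ asymCone X γ := by
  obtain ⟨K, hK⟩ := eventually_atTop.1 (hu.eventually_gt_atTop 0)
  exact ⟨fun k => x (k + K), fun k => u (k + K), fun k => hx _, fun k => hK _ (by omega),
    (tendsto_add_atTop_iff_nat K).2 hu,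
    (tendsto_add_atTop_iff_nat (f := fun k => (u k ^ γ)⁻¹ • x k) K).2 hy⟩

lemma zero_mem_of_neg {n : ℕ} {X : Set (Rn n)} {γ : ℝ} (hγ : γ < 0) (hX : IsClosed X)
    {y : Rn n} (hy : y ∈ asymCone X γ) : (0 : Rn n) ∈ X := by
  obtain ⟨a, lk, ha, hl, hlt, hay⟩ := hy
  have h1 : Tendsto (fun k => lk k ^ γ) atTop (𝓝 0) := by
    have := (tendsto_rpow_neg_atTop (y := -γ) (by linarith)).comp hlt
    simpa [Function.comp_def] using this
  have h2 := h1.smul hay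
  rw [zero_smul] at h2
  refine hX.mem_of_tendsto h2 (Eventually.of_forall fun k => ?_)
  have : lk k ^ γ ≠ 0 := (Real.rpow_pos_of_pos (hl k) _).ne'
  simp only [smul_smul, mul_inv_cancel₀ this, one_smul]
  exact ha k

lemma default_claim {n : ℕ} {X : Set (Rn n)} {γ : ℝ} (hγ : γ ≠ 0) (hX : IsClosed X)
    (hc : Convex ℝ X) (hne : X.Nonempty) {y : Rn n} (hy : y ∈ asymCone X γ) {η : ℝ} (hη : 0 < η) :
    ∃ N : ℝ, 0 < N ∧ ∀ u, N ≤ u → ∃ p ∈ X, dist p (u ^ γ • y) < η * u ^ γ := by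
  rcases lt_or_gt_of_ne hγ with h | h
  · have h0 := zero_mem_of_neg h hX hy
    obtain ⟨a, lk, ha, hl, hlt, hay⟩ := hy
    obtain ⟨k, hk⟩ := (Metric.tendsto_atTop.1 hay) η hη
    have hk := hk k le_rfl
    refine ⟨lk k, hl k, fun u hu => ⟨u ^ γ • (lk k ^ γ)⁻¹ • a k, ?_, ?_⟩⟩
    · have hu0 : 0 < u := (hl k).trans_le hu
      rw [smul_smul]
      refine hc.smul_mem_of_zero_mem h0 (ha k) ⟨by positivity [hl k], ?_⟩
      rw [← div_eq_mul_inv]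
      exact div_le_one_of_le₀ (Real.rpow_le_rpow_of_nonpos (hl k) hu h.le)
        (Real.rpow_nonneg (hl k).le _)
    · have hu0 : 0 < u ^ γ := Real.rpow_pos_of_pos ((hl k).trans_le hu) _
      rw [dist_smul₀, Real.norm_of_nonneg hu0.le, mul_comm]
      exact mul_lt_mul_of_pos_right hk hu0
  · obtain ⟨x0, hx0⟩ := hne
    have hrec : ∀ t : ℝ, 0 ≤ t → x0 + t • y ∈ X := by
      intro t ht
      obtain ⟨a, lk, ha, hl, hlt, hay⟩ := hy
      have h1 : Tendsto (fun k => (lk k ^ γ)) atTop atTop := (tendsto_rpow_atTop h).comp hlt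
      have h2 : Tendsto (fun k => (lk k ^ γ)⁻¹) atTop (𝓝 0) := tendsto_inv_atTop_zero.comp h1
      have h3 : Tendsto (fun k => x0 + t • ((lk k ^ γ)⁻¹ • a k - (lk k ^ γ)⁻¹ • x0)) atTop
          (𝓝 (x0 + t • (y - (0 : ℝ) • x0))) :=
        tendsto_const_nhds.add ((hay.sub (h2.smul_const x0)).const_smul t)
      simp only [zero_smul, sub_zero] at h3
      refine hX.mem_of_tendsto h3 ?_
      filter_upwards [h1.eventually_ge_atTop t] with k hk
      rw [← smul_sub, smul_smul, add_comm, ← AffineMap.lineMap_apply_module']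
      · have hp : 0 < lk k ^ γ := Real.rpow_pos_of_pos (hl k) _
        refine hc.lineMap_mem hx0 (ha k) ⟨by positivity, ?_⟩
        rw [← div_eq_mul_inv]
        exact div_le_one_of_le₀ hk hp.le
    have h1 : Tendsto (fun u : ℝ => η * u ^ γ) atTop atTop :=
      (tendsto_rpow_atTop h).const_mul_atTop hη
    obtain ⟨N, hN⟩ := eventually_atTop.1 ((h1.eventually_gt_atTop ‖x0‖).and
      (eventually_gt_atTop 0))
    refine ⟨N, (hN N le_rfl).2, fun u hu => ⟨x0 + u ^ γ • y, hrec _ ?_, ?_⟩⟩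
    · exact Real.rpow_nonneg (hN u hu).2.le _
    · rw [dist_eq_norm, add_sub_cancel_right]
      exact (hN u hu).1

lemma default_family {n : ℕ} {X : Set (Rn n)} {γ : ℝ} (hγ : γ ≠ 0) (hX : IsClosed X)
    (hc : Convex ℝ X) (hne : X.Nonempty) {y : Rn n} (hy : y ∈ asymCone X γ) :
    ∃ xu : ℝ → Rn n, (∀ u, xu u ∈ X) ∧
      Tendsto (fun u : ℝ => (u ^ γ)⁻¹ • xu u) atTop (𝓝 y) := by
  choose xu hxu hd using fun u : ℝ => hX.exists_infDist_eq_dist hne (u ^ γ • y)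
  refine ⟨xu, hxu, Metric.tendsto_atTop.2 fun η hη => ?_⟩
  obtain ⟨N, hN, h⟩ := default_claim hγ hX hc hne hy hη
  refine ⟨N, fun u hu => ?_⟩
  obtain ⟨p, hp, hpd⟩ := h u hu
  have hu0 : 0 < u ^ γ := Real.rpow_pos_of_pos (hN.trans_le hu) _
  have h1 : dist (xu u) (u ^ γ • y) < η * u ^ γ := by
    rw [dist_comm, ← hd]
    refine lt_of_le_of_lt (Metric.infDist_le_dist_of_mem hp) ?_
    rwa [dist_comm]
  have h2 : y = (u ^ γ)⁻¹ • (u ^ γ • y) := by rw [smul_smul, inv_mul_cancel₀ hu0.ne', one_smul]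
  rw [h2, dist_smul₀, norm_inv, Real.norm_of_nonneg hu0.le, inv_mul_lt_iff₀ hu0, mul_comm]
  exact h1

lemma A1seq {n m : ℕ} {X : Set (Rn n)} {Ξ : Set (Rn m)} {g : Rn n → Rn m → ℝ} {γ ρ : ℝ}
    {gs : Rn n → Rn m → ℝ} (hγ : γ ≠ 0) (hX : IsClosed X) (hc : Convex ℝ X) (hne : X.Nonempty)
    (hcone : IsPosCone Ξ) (hA : CondA1 X Ξ g γ ρ gs) {y : Rn n} {w : Rn m} (hw : w ∈ Ξ)
    {u : ℕ → ℝ} (hu : Tendsto u atTop atTop) {x : ℕ → Rn n} {z : ℕ → Rn m}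
    (hx : ∀ k, x k ∈ X) (hz : ∀ k, z k ∈ Ξ)
    (hxy : Tendsto (fun k => (u k ^ γ)⁻¹ • x k) atTop (𝓝 y))
    (hzw : Tendsto (fun k => (u k)⁻¹ • z k) atTop (𝓝 w)) :
    Tendsto (fun k => g (x k) (z k) / u k ^ ρ) atTop (𝓝 (gs y w)) := by
  have hy := mem_asymCone_of_tendsto hu hx hxy
  obtain ⟨xd, hxd, hxdt⟩ := default_family hγ hX hc hne hy
  refine tendsto_of_subseq_tendsto fun ns hns => ?_
  obtain ⟨φ, hφ, hmono⟩ := strictMono_subseq_of_tendsto_atTop (hu.comp hns)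
  refine ⟨φ, ?_⟩
  have hnφ : Tendsto (ns ∘ φ) atTop atTop := hns.comp hφ.tendsto_atTop
  have key := hA.2 y hy w hw (Function.extend ((u ∘ ns) ∘ φ) (x ∘ ns ∘ φ) xd)
    (Function.extend ((u ∘ ns) ∘ φ) (z ∘ ns ∘ φ) (fun v => if 0 < v then v • w else w)) ?_ ?_ ?_ ?_
  · have h2 := key.comp (hu.comp hnφ)
    refine h2.congr fun k => ?_
    have e1 : u ((ns ∘ φ) k) = ((u ∘ ns) ∘ φ) k := rfl
    simp only [Function.comp_apply] at e1 ⊢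
    have i1 := hmono.injective.extend_apply (x ∘ ns ∘ φ) xd k
    have i2 := hmono.injective.extend_apply (z ∘ ns ∘ φ) (fun v => if 0 < v then v • w else w) k
    simp only [Function.comp_apply] at i1 i2
    rw [i1, i2]
  · intro v _
    by_cases h : ∃ k, ((u ∘ ns) ∘ φ) k = v
    · obtain ⟨k, rfl⟩ := h
      rw [hmono.injective.extend_apply]; exact hx _
    · rw [Function.extend_apply' _ _ _ h]; exact hxd _
  · intro v hv
    by_cases h : ∃ k, ((u ∘ ns) ∘ φ) k = v
    · obtain ⟨k, rfl⟩ := h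
      rw [hmono.injective.extend_apply]; exact hz _
    · rw [Function.extend_apply' _ _ _ h, if_pos hv]; exact hcone v hv w hw
  · exact extend_tendsto hmono _ _ (fun v a => (v ^ γ)⁻¹ • a) _ (hxy.comp hnφ) hxdt
  · refine extend_tendsto hmono _ _ (fun v a => v⁻¹ • a) _ (hzw.comp hnφ) ?_
    refine tendsto_const_nhds.congr' ?_
    filter_upwards [eventually_gt_atTop 0] with v hv
    rw [if_pos hv, smul_smul, inv_mul_cancel₀ hv.ne', one_smul]

lemma MRVseq {m : ℕ} {Ξ : Set (Rn m)} {Q : Rn m → ℝ} {q : ℝ → ℝ} {lam : Rn m → ℝ}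
    (hM : MultiRegVary Ξ Q q lam) {w : Rn m} (hw : w ∈ Ξ)
    {u : ℕ → ℝ} (hu : Tendsto u atTop atTop) {z : ℕ → Rn m} (hz : ∀ k, z k ∈ Ξ)
    (hzw : Tendsto z atTop (𝓝 w)) :
    Tendsto (fun k => Q (u k • z k) / q (u k)) atTop (𝓝 (lam w)) := by
  refine tendsto_of_subseq_tendsto fun ns hns => ?_
  obtain ⟨φ, hφ, hmono⟩ := strictMono_subseq_of_tendsto_atTop (hu.comp hns)
  refine ⟨φ, ?_⟩
  have hnφ : Tendsto (ns ∘ φ) atTop atTop := hns.comp hφ.tendsto_atTop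
  have key := hM.2.2.2 w hw (Function.extend ((u ∘ ns) ∘ φ) (z ∘ ns ∘ φ) (fun _ => w)) ?_ ?_
  · have h2 := key.comp (hu.comp hnφ)
    refine h2.congr fun k => ?_
    have i2 := hmono.injective.extend_apply (z ∘ ns ∘ φ) (fun _ => w) k
    simp only [Function.comp_apply] at i2 ⊢
    rw [i2]
  · intro v hv
    by_cases h : ∃ k, ((u ∘ ns) ∘ φ) k = v
    · obtain ⟨k, rfl⟩ := h
      rw [hmono.injective.extend_apply]; exact hz _
    · rw [Function.extend_apply' _ _ _ h]; exact hw
  · exact extend_tendsto hmono _ _ (fun v a => a) _ (hzw.comp hnφ) tendsto_const_nhds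

lemma A2seq {n m : ℕ} {X : Set (Rn n)} {Ξ : Set (Rn m)} {g : Rn n → Rn m → ℝ} {γ ρ : ℝ}
    {gs : Rn n → Rn m → ℝ} (hA2 : Assumption2 X Ξ g γ ρ gs) {y : Rn n} {w : Rn m} (hw : w ∈ Ξ)
    {u : ℕ → ℝ} (hu : Tendsto u atTop atTop) {x : ℕ → Rn n} {z : ℕ → Rn m}
    (hx : ∀ k, x k ∈ X) (hz : ∀ k, z k ∈ Ξ)
    (hxy : Tendsto (fun k => (u k ^ γ)⁻¹ • x k) atTop (𝓝 y))
    (hzw : Tendsto (fun k => (u k)⁻¹ • z k) atTop (𝓝 w)) :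
    Tendsto (fun k => g (x k) (z k) / u k ^ ρ) atTop (𝓝 (gs y w)) := by
  obtain ⟨⟨h1, h2, h3, h4, h5, h6, h7, h8, h9⟩, hγ, hρ, hA, -⟩ := hA2
  exact A1seq hγ h2 h3 h1 h6 hA hw hu hx hz hxy hzw

lemma natseq {n m : ℕ} {X : Set (Rn n)} {Ξ : Set (Rn m)} {g : Rn n → Rn m → ℝ} {γ ρ : ℝ}
    {gs : Rn n → Rn m → ℝ} (hA2 : Assumption2 X Ξ g γ ρ gs) {y : Rn n}
    (hy : y ∈ asymCone X γ) : ∃ x : ℕ → Rn n, (∀ k, x k ∈ X) ∧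
      Tendsto (fun k : ℕ => (((k : ℝ) + 1) ^ γ)⁻¹ • x k) atTop (𝓝 y) := by
  obtain ⟨⟨h1, h2, h3, h4, h5, h6, h7, h8, h9⟩, hγ, hρ, hA, -⟩ := hA2
  obtain ⟨xu, hxu, ht⟩ := default_family hγ h2 h3 h1 hy
  refine ⟨fun k => xu ((k : ℝ) + 1), fun k => hxu _, ?_⟩
  exact ht.comp (tendsto_atTop_add_const_right _ 1 tendsto_natCast_atTop_atTop)

lemma tendsto_nat1 : Tendsto (fun k : ℕ => (k : ℝ) + 1) atTop atTop :=
  tendsto_atTop_add_const_right _ 1 tendsto_natCast_atTop_atTop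

lemma nat1_smul {m : ℕ} (w : Rn m) :
    Tendsto (fun k : ℕ => ((k : ℝ) + 1)⁻¹ • (((k : ℝ) + 1) • w)) atTop (𝓝 w) := by
  refine tendsto_const_nhds.congr fun k => ?_
  have : (k : ℝ) + 1 ≠ 0 := by positivity
  rw [smul_smul, inv_mul_cancel₀ this, one_smul]

lemma cone_smul {n m : ℕ} {X : Set (Rn n)} {Ξ : Set (Rn m)} {g : Rn n → Rn m → ℝ} {γ ρ : ℝ}
    {gs : Rn n → Rn m → ℝ} (hA2 : Assumption2 X Ξ g γ ρ gs) {y : Rn n}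
    (hy : y ∈ asymCone X γ) {t : ℝ} (ht : 0 < t) : t ^ γ • y ∈ asymCone X γ := by
  obtain ⟨x, hx, hxt⟩ := natseq hA2 hy
  refine mem_asymCone_of_tendsto (u := fun k : ℕ => ((k : ℝ) + 1) / t)
    (tendsto_nat1.atTop_div_const ht) hx ?_
  refine (hxt.const_smul (t ^ γ)).congr fun k => ?_
  have : (0 : ℝ) ≤ (k : ℝ) + 1 := by positivity
  rw [Real.div_rpow this ht.le, inv_div, smul_smul, div_eq_mul_inv]

lemma gs_hom {n m : ℕ} {X : Set (Rn n)} {Ξ : Set (Rn m)} {g : Rn n → Rn m → ℝ} {γ ρ : ℝ}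
    {gs : Rn n → Rn m → ℝ} (hA2 : Assumption2 X Ξ g γ ρ gs) {y : Rn n} {w : Rn m} (hw : w ∈ Ξ)
    (hy : y ∈ asymCone X γ) {t : ℝ} (ht : 0 < t) :
    gs (t ^ γ • y) (t • w) = t ^ ρ * gs y w := by
  obtain ⟨x, hx, hxt⟩ := natseq hA2 hy
  have hcone : IsPosCone Ξ := hA2.1.2.2.2.2.2.1
  have hz : ∀ k : ℕ, ((k : ℝ) + 1) • w ∈ Ξ := fun k => hcone _ (by positivity) w hw
  have l1 := A2seq hA2 hw tendsto_nat1 hx hz hxt (nat1_smul w)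
  have l2 := A2seq hA2 (hcone t ht w hw) (u := fun k : ℕ => ((k : ℝ) + 1) / t)
    (tendsto_nat1.atTop_div_const ht) hx hz (y := t ^ γ • y) ?_ ?_
  · refine tendsto_nhds_unique l2 ((l1.const_mul (t ^ ρ)).congr fun k => ?_)
    have : (0 : ℝ) ≤ (k : ℝ) + 1 := by positivity
    rw [Real.div_rpow this ht.le]
    have : t ^ ρ ≠ 0 := (Real.rpow_pos_of_pos ht _).ne'
    field_simp
  · refine (hxt.const_smul (t ^ γ)).congr fun k => ?_
    have : (0 : ℝ) ≤ (k : ℝ) + 1 := by positivity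
    rw [Real.div_rpow this ht.le, inv_div, smul_smul, div_eq_mul_inv]
  · refine ((nat1_smul w).const_smul t).congr fun k => ?_
    rw [inv_div, smul_smul, div_eq_mul_inv]

lemma gs_conv {n m : ℕ} {X : Set (Rn n)} {Ξ : Set (Rn m)} {g : Rn n → Rn m → ℝ} {γ ρ : ℝ}
    {gs : Rn n → Rn m → ℝ} (hA2 : Assumption2 X Ξ g γ ρ gs) {y y' : Rn n} {w : Rn m} (hw : w ∈ Ξ)
    (hy : y ∈ asymCone X γ) (hy' : y' ∈ asymCone X γ) {a b : ℝ} (ha : 0 ≤ a) (hb : 0 ≤ b)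
    (hab : a + b = 1) :
    gs (a • y + b • y') w ≤ a * gs y w + b * gs y' w := by
  obtain ⟨x, hx, hxt⟩ := natseq hA2 hy
  obtain ⟨x', hx', hxt'⟩ := natseq hA2 hy'
  have hcone : IsPosCone Ξ := hA2.1.2.2.2.2.2.1
  have hz : ∀ k : ℕ, ((k : ℝ) + 1) • w ∈ Ξ := fun k => hcone _ (by positivity) w hw
  have l1 := A2seq hA2 hw tendsto_nat1 hx hz hxt (nat1_smul w)
  have l2 := A2seq hA2 hw tendsto_nat1 hx' hz hxt' (nat1_smul w)
  have l3 := A2seq hA2 hw tendsto_nat1 (x := fun k => a • x k + b • x' k)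
    (fun k => hA2.1.2.2.1 (hx k) (hx' k) ha hb hab) hz (y := a • y + b • y') ?_ (nat1_smul w)
  · refine le_of_tendsto_of_tendsto' l3 ((l1.const_mul a).add (l2.const_mul b)) fun k => ?_
    have h := (hA2.1.2.2.2.2.2.2.1 _ (hz k)).2 (hx k) (hx' k) ha hb hab
    simp only [smul_eq_mul] at h
    have hp : 0 < ((k : ℝ) + 1) ^ ρ := by positivity
    rw [← mul_div_assoc, ← mul_div_assoc, ← add_div]
    exact div_le_div_of_nonneg_right h hp.le
  · refine ((hxt.const_smul a).add (hxt'.const_smul b)).congr fun k => ?_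
    rw [smul_add, smul_comm a, smul_comm b]

lemma zero_mem_cone {m : ℕ} {Ξ : Set (Rn m)} (h : Ξ.Nonempty) (hc : IsClosed Ξ)
    (hcone : IsPosCone Ξ) : (0 : Rn m) ∈ Ξ := by
  obtain ⟨z, hz⟩ := h
  have h1 : Tendsto (fun k : ℕ => ((k : ℝ) + 1)⁻¹ • z) atTop (𝓝 ((0 : ℝ) • z)) :=
    (tendsto_inv_atTop_zero.comp tendsto_nat1).smul_const z
  rw [zero_smul] at h1
  exact hc.mem_of_tendsto h1 (Eventually.of_forall fun k => hcone _ (by positivity) z hz)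

lemma gs_small {n m : ℕ} {X : Set (Rn n)} {Ξ : Set (Rn m)} {g : Rn n → Rn m → ℝ} {γ ρ : ℝ}
    {gs : Rn n → Rn m → ℝ} (hA2 : Assumption2 X Ξ g γ ρ gs) {y : Rn n}
    (hy : y ∈ asymCone X γ) (hy0 : y ≠ 0) : ∃ r > 0, ∀ w ∈ Ξ, ‖w‖ < r → gs y w < 0 := by
  obtain ⟨⟨h1, h2, h3, h4, h5, h6, h7, h8, h9⟩, hγ, hρ, hA, hB, hC, -⟩ := hA2
  have h0 := zero_mem_cone h4 h5 h6
  have hc : ContinuousOn (fun w => gs y w) Ξ := by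
    have : ContinuousOn (fun w : Rn m => (y, w)) Ξ := by fun_prop
    exact hA.1.comp this fun w hw => ⟨hy, hw⟩
  have := (hc 0 h0).eventually (gt_mem_nhds (hC y ⟨hy, hy0⟩))
  obtain ⟨r, hr, h⟩ := Metric.mem_nhdsWithin_iff.1 this
  exact ⟨r, hr, fun w hw hwr => h ⟨by simpa using hwr, hw⟩⟩

lemma exists_small_smul {m : ℕ} (w : Rn m) {r : ℝ} (hr : 0 < r) :
    ∃ t : ℝ, 0 < t ∧ t < 1 ∧ ‖t • w‖ < r := by
  refine ⟨min (1/2) (r / (2 * (‖w‖ + 1))), by positivity, ?_, ?_⟩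
  · exact lt_of_le_of_lt (min_le_left _ _) (by norm_num)
  · rw [norm_smul, Real.norm_of_nonneg (by positivity)]
    calc _ ≤ r / (2 * (‖w‖ + 1)) * (‖w‖ + 1) := by
          gcongr
          · exact min_le_right _ _
          · linarith
      _ = r / 2 := by field_simp
      _ < r := by linarith

lemma gs_push {n m : ℕ} {X : Set (Rn n)} {Ξ : Set (Rn m)} {g : Rn n → Rn m → ℝ} {γ ρ : ℝ}
    {gs : Rn n → Rn m → ℝ} (hA2 : Assumption2 X Ξ g γ ρ gs) {y : Rn n} {w : Rn m} (hw : w ∈ Ξ)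
    (hy : y ∈ asymCone X γ) (hy0 : y ≠ 0) (hyw : 0 ≤ gs y w) {t : ℝ} (ht : 1 < t) :
    0 < gs y (t • w) := by
  obtain ⟨r0, hr0, hsm⟩ := gs_small hA2 hy hy0
  obtain ⟨r, hr, hr1, hrw⟩ := exists_small_smul w hr0
  have hcone : IsPosCone Ξ := hA2.1.2.2.2.2.2.1
  have hγ := hA2.2.1
  have hneg := hsm _ (hcone r hr w hw) hrw
  have key : ∀ τ : ℝ, 0 < τ → gs y (τ • w) = τ ^ ρ * gs ((τ⁻¹) ^ γ • y) w := by
    intro τ hτ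
    have := gs_hom hA2 hw (cone_smul hA2 hy (inv_pos.2 hτ)) hτ
    rw [← this, smul_smul, ← Real.mul_rpow hτ.le (inv_pos.2 hτ).le, mul_inv_cancel₀ hτ.ne',
      Real.one_rpow, one_smul]
  have ht0 : 0 < t := by linarith
  rw [key r hr] at hneg
  rw [key t ht0]
  have hneg' : gs ((r⁻¹) ^ γ • y) w < 0 := by
    by_contra hh
    push Not at hh
    have : 0 < r ^ ρ := Real.rpow_pos_of_pos hr _
    nlinarith
  refine mul_pos (Real.rpow_pos_of_pos ht0 _) ?_
  set A := (t⁻¹) ^ γ with hA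
  set B := (r⁻¹) ^ γ with hB
  have ht1 : t⁻¹ < 1 := inv_lt_one_of_one_lt₀ ht
  have hr1' : 1 < r⁻¹ := (one_lt_inv₀ hr).2 hr1
  have hti : 0 < t⁻¹ := inv_pos.2 ht0
  obtain ⟨a, b, ha, hb, hab, habc⟩ : ∃ a b : ℝ, 0 < a ∧ 0 < b ∧ a + b = 1 ∧ a * A + b * B = 1 := by
    rcases lt_or_gt_of_ne hγ with h | h
    · have h1 : 1 < A := Real.one_lt_rpow_of_pos_of_lt_one_of_neg hti ht1 h
      have h2 : B < 1 := Real.rpow_lt_one_of_one_lt_of_neg hr1' h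
      refine ⟨(1 - B) / (A - B), (A - 1) / (A - B), div_pos (by linarith) (by linarith),
        div_pos (by linarith) (by linarith), ?_, ?_⟩
      all_goals
        have : A - B ≠ 0 := by linarith
        field_simp
        ring
    · have h1 : A < 1 := Real.rpow_lt_one hti.le ht1 h
      have h2 : 1 < B := Real.one_lt_rpow hr1' h
      refine ⟨(B - 1) / (B - A), (1 - A) / (B - A), div_pos (by linarith) (by linarith),
        div_pos (by linarith) (by linarith), ?_, ?_⟩
      all_goals
        have : B - A ≠ 0 := by linarith
        field_simp
        ring
  have hcv := gs_conv hA2 hw (cone_smul hA2 hy hti) (cone_smul hA2 hy (inv_pos.2 hr)) ha.le hb.le hab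
  rw [smul_smul, smul_smul, ← add_smul, habc, one_smul] at hcv
  by_contra hh
  push Not at hh
  nlinarith

lemma robust_false {n m : ℕ} {X : Set (Rn n)} {Ξ : Set (Rn m)} {g : Rn n → Rn m → ℝ} {γ ρ : ℝ}
    {gs : Rn n → Rn m → ℝ} (hA2 : Assumption2 X Ξ g γ ρ gs) {p : Rn n} (hp : p ∈ X)
    (hp0 : γ < 0 → p ≠ 0) (hrob : ∀ z ∈ Ξ, g p z ≤ 0) : False := by
  obtain ⟨⟨h1, h2, h3, h4, h5, h6, h7, h8, h9⟩, hγ, hρ, hA, ⟨y, hy, hy0⟩, hC, hD, hE⟩ := id hA2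
  have hy0 : y ≠ 0 := hy0
  rcases lt_or_gt_of_ne hγ with h | h
  · have hz := zero_mem_of_neg h h2 hy
    have hxm : ∀ k : ℕ, ((k : ℝ) + 1) ^ γ • p ∈ X ∧ ∀ z ∈ Ξ, g (((k : ℝ) + 1) ^ γ • p) z ≤ 0 := by
      intro k
      have e1 : 0 ≤ ((k : ℝ) + 1) ^ γ := by positivity
      have e2 : ((k : ℝ) + 1) ^ γ ≤ 1 :=
        Real.rpow_le_one_of_one_le_of_nonpos (by linarith [(Nat.cast_nonneg k : (0 : ℝ) ≤ k)]) h.le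
      refine ⟨h3.smul_mem_of_zero_mem hz hp ⟨e1, e2⟩, fun z hzz => ?_⟩
      have := (h7 z hzz).2 hp hz e1 (sub_nonneg.2 e2) (by ring)
      simp only [smul_zero, add_zero, smul_eq_mul] at this
      nlinarith [hrob z hzz, hE h z hzz]
    have hlim : Tendsto (fun k : ℕ => (((k : ℝ) + 1) ^ γ)⁻¹ • (((k : ℝ) + 1) ^ γ • p)) atTop
        (𝓝 p) := by
      refine tendsto_const_nhds.congr fun k => ?_
      have : ((k : ℝ) + 1) ^ γ ≠ 0 := by positivity
      rw [smul_smul, inv_mul_cancel₀ this, one_smul]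
    have hpc : p ∈ asymCone X γ := mem_asymCone_of_tendsto tendsto_nat1 (fun k => (hxm k).1) hlim
    obtain ⟨w, hw, hwp⟩ := hD p ⟨hpc, hp0 h⟩
    have hzz : ∀ k : ℕ, ((k : ℝ) + 1) • w ∈ Ξ := fun k => h6 _ (by positivity) w hw
    have l := A2seq hA2 hw tendsto_nat1 (fun k => (hxm k).1) hzz hlim (nat1_smul w)
    refine absurd (le_of_tendsto' l fun k => ?_) (not_le.2 hwp)
    exact div_nonpos_of_nonpos_of_nonneg ((hxm k).2 _ (hzz k)) (by positivity)
  · obtain ⟨w, hw, hwp⟩ := hD y ⟨hy, hy0⟩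
    have hzz : ∀ k : ℕ, ((k : ℝ) + 1) • w ∈ Ξ := fun k => h6 _ (by positivity) w hw
    have hlim : Tendsto (fun k : ℕ => (((k : ℝ) + 1) ^ γ)⁻¹ • p) atTop (𝓝 0) := by
      have := (tendsto_inv_atTop_zero.comp ((tendsto_rpow_atTop h).comp tendsto_nat1)).smul_const p
      simpa using this
    have h0c : (0 : Rn n) ∈ asymCone X γ := mem_asymCone_of_tendsto tendsto_nat1 (fun k => hp) hlim
    have l := A2seq hA2 hw tendsto_nat1 (fun k => hp) hzz hlim (nat1_smul w)
    have hle : gs 0 w ≤ 0 := le_of_tendsto' l fun k =>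
      div_nonpos_of_nonpos_of_nonneg (hrob _ (hzz k)) (by positivity)
    obtain ⟨r0, hr0, hsm⟩ := gs_small hA2 hy hy0
    obtain ⟨r, hr, hr1, hrw⟩ := exists_small_smul w hr0
    have hneg := hsm _ (h6 r hr w hw) hrw
    have hy' := cone_smul hA2 hy (inv_pos.2 hr)
    have hh := gs_hom hA2 hw hy' hr
    have e : r ^ γ * r⁻¹ ^ γ = 1 := by
      rw [← Real.mul_rpow hr.le (inv_pos.2 hr).le, mul_inv_cancel₀ hr.ne', Real.one_rpow]
    rw [smul_smul, e, one_smul] at hh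
    have hrρ : 0 < r ^ ρ := Real.rpow_pos_of_pos hr _
    have hrγ : 0 < r ^ γ := Real.rpow_pos_of_pos hr _
    have hrγ1 : r ^ γ ≤ 1 := (Real.rpow_lt_one hr.le hr1 h).le
    have hcv := gs_conv hA2 hw hy' h0c hrγ.le (sub_nonneg.2 hrγ1) (by ring)
    rw [smul_smul, e, one_smul, smul_zero, add_zero] at hcv
    have : gs (r⁻¹ ^ γ • y) w < 0 := by
      by_contra hh'
      push Not at hh'
      nlinarith
    nlinarith

lemma lam_hom {m : ℕ} {P : Measure (Rn m)} {Ξ : Set (Rn m)} {Q : Rn m → ℝ} {q : ℝ → ℝ}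
    {lam : Rn m → ℝ} {α : ℝ} (hA1 : Assumption1 P Ξ Q q lam α) {w : Rn m} (hw : w ∈ Ξ)
    {t : ℝ} (ht : 0 < t) : lam (t • w) = t ^ α * lam w := by
  obtain ⟨hP, hne, hcl, hcone, hP1, hsup, hden, hα, hq, hM, hlam⟩ := hA1
  have l1 := MRVseq hM (hcone t ht w hw) tendsto_nat1 (z := fun _ => t • w)
    (fun _ => hcone t ht w hw) tendsto_const_nhds
  have l2 := MRVseq hM hw (u := fun k : ℕ => ((k : ℝ) + 1) * t) (tendsto_nat1.atTop_mul_const ht)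
    (z := fun _ => w) (fun _ => hw) tendsto_const_nhds
  have l3 := (hq.2 t ht).comp tendsto_nat1
  refine tendsto_nhds_unique l1 ((l3.mul l2).congr fun k => ?_)
  have hk : (0 : ℝ) < (k : ℝ) + 1 := by positivity
  have e1 := hq.1 _ hk
  have e2 := hq.1 _ (mul_pos hk ht)
  simp only [Function.comp_apply, smul_smul]
  field_simp

lemma lam_lower {m : ℕ} {P : Measure (Rn m)} {Ξ : Set (Rn m)} {Q : Rn m → ℝ} {q : ℝ → ℝ}
    {lam : Rn m → ℝ} {α : ℝ} (hA1 : Assumption1 P Ξ Q q lam α) :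
    ∃ c > 0, ∀ w ∈ Ξ, c * ‖w‖ ^ α ≤ lam w := by
  obtain ⟨hP, hne, hcl, hcone, hP1, hsup, hden, hα, hq, hM, hlam⟩ := id hA1
  obtain ⟨c, hc, h⟩ : ∃ c > 0, ∀ w ∈ Ξ, ‖w‖ = 1 → c ≤ lam w := by
    have hK : IsCompact (Metric.sphere (0 : Rn m) 1 ∩ Ξ) := (isCompact_sphere _ _).inter_right hcl
    rcases (Metric.sphere (0 : Rn m) 1 ∩ Ξ).eq_empty_or_nonempty with he | hne'
    · refine ⟨1, one_pos, fun w hw hw1 => ?_⟩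
      have : w ∈ Metric.sphere (0 : Rn m) 1 ∩ Ξ := ⟨by simpa using hw1, hw⟩
      rw [he] at this
      exact this.elim
    · obtain ⟨w0, hw0, hmin⟩ := hK.exists_isMinOn hne' (hM.2.2.1.mono inter_subset_right)
      refine ⟨lam w0, hlam w0 hw0.2 (by simpa using hw0.1), fun w hw hw1 => ?_⟩
      exact hmin ⟨by simpa using hw1, hw⟩
  refine ⟨c, hc, fun w hw => ?_⟩
  by_cases hw0 : w = 0
  · subst hw0
    rw [norm_zero, Real.zero_rpow hα.ne', mul_zero]
    exact hM.2.1 _ hw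
  · have hn : 0 < ‖w‖ := norm_pos_iff.2 hw0
    have hm := hcone _ (inv_pos.2 hn) w hw
    have h1 := h _ hm (by rw [norm_smul, norm_inv, norm_norm, inv_mul_cancel₀ hn.ne'])
    have h2 := lam_hom hA1 hm hn
    rw [smul_smul, mul_inv_cancel₀ hn.ne', one_smul] at h2
    rw [h2, mul_comm]
    exact mul_le_mul_of_nonneg_left h1 (Real.rpow_nonneg hn.le _)

lemma Q_scale {m : ℕ} {P : Measure (Rn m)} {Ξ : Set (Rn m)} {Q : Rn m → ℝ} {q : ℝ → ℝ}
    {lam : Rn m → ℝ} {α : ℝ} (hA1 : Assumption1 P Ξ Q q lam α) {t δ : ℝ} (ht : 0 < t)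
    (hδ : t ^ α < δ) : ∃ R > 0, ∀ z ∈ Ξ, R ≤ ‖z‖ → Q (t • z) ≤ δ * Q z := by
  obtain ⟨hP, hne, hcl, hcone, hP1, hsup, hden, hα, hq, hM, hlam⟩ := id hA1
  by_contra hcon
  push Not at hcon
  choose z hz hzn hzQ using fun k : ℕ => hcon ((k : ℝ) + 1) (by positivity)
  have hn : ∀ k, 0 < ‖z k‖ := fun k => lt_of_lt_of_le (by positivity) (hzn k)
  have hu : Tendsto (fun k => ‖z k‖) atTop atTop := tendsto_atTop_mono hzn tendsto_nat1
  have hsph : ∀ k, (‖z k‖)⁻¹ • z k ∈ Metric.sphere (0 : Rn m) 1 := fun k => by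
    simp [norm_smul, (hn k).ne']
  obtain ⟨w, hw1, φ, hφ, hw⟩ := (isCompact_sphere (0 : Rn m) 1).tendsto_subseq hsph
  have hmem : ∀ k, (‖z k‖)⁻¹ • z k ∈ Ξ := fun k => hcone _ (inv_pos.2 (hn k)) _ (hz k)
  have hwΞ : w ∈ Ξ := hcl.mem_of_tendsto hw (Eventually.of_forall fun k => hmem _)
  have l1 := MRVseq hM hwΞ (hu.comp hφ.tendsto_atTop) (fun k => hmem (φ k)) hw
  have l2 := MRVseq hM (hcone t ht w hwΞ) (hu.comp hφ.tendsto_atTop)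
    (fun k => hcone t ht _ (hmem (φ k))) (hw.const_smul t)
  rw [lam_hom hA1 hwΞ ht] at l2
  have hlw := hlam w hwΞ (by simpa using hw1)
  have hle := le_of_tendsto_of_tendsto' (l1.const_mul δ) l2 fun k => ?_
  · nlinarith
  · have hqp := hq.1 _ (hn (φ k))
    simp only [Function.comp_apply]
    have e : ‖z (φ k)‖ • (‖z (φ k)‖)⁻¹ • z (φ k) = z (φ k) := by
      rw [smul_smul, mul_inv_cancel₀ (hn (φ k)).ne', one_smul]
    rw [smul_comm _ t, e, ← mul_div_assoc]
    exact div_le_div_of_nonneg_right (hzQ (φ k)).le hqp.le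

lemma halving {m : ℕ} {Ξ : Set (Rn m)} {Q : Rn m → ℝ} (hcone : IsPosCone Ξ) {R N : ℝ}
    (hRN : R ≤ N) (hmono : ∀ z ∈ Ξ, R ≤ ‖z‖ → Q ((1 / 2 : ℝ) • z) ≤ 1 * Q z) (j : ℕ) :
    ∀ z ∈ Ξ, ‖z‖ ≤ 2 ^ j * N →
      ∃ z' ∈ Ξ, Q z' ≤ Q z ∧ ‖z'‖ ≤ N ∧ (z' = z ∨ N / 2 ≤ ‖z'‖) := by
  induction j with
  | zero =>
    intro z hz hn
    exact ⟨z, hz, le_rfl, by simpa using hn, Or.inl rfl⟩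
  | succ j ih =>
    intro z hz hn
    by_cases h : ‖z‖ ≤ N
    · exact ⟨z, hz, le_rfl, h, Or.inl rfl⟩
    · push Not at h
      have hnh : ‖(1 / 2 : ℝ) • z‖ = ‖z‖ / 2 := by
        rw [norm_smul, Real.norm_of_nonneg (by norm_num)]; ring
      obtain ⟨z', hz', hQ, hN, hor⟩ := ih ((1 / 2 : ℝ) • z) (hcone _ (by norm_num) z hz)
        (by rw [hnh]; rw [pow_succ] at hn; linarith)
      refine ⟨z', hz', ?_, hN, Or.inr ?_⟩
      · have := hmono z hz (by linarith)
        linarith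
      · rcases hor with rfl | h'
        · rw [hnh]; linarith
        · exact h'

lemma halving' {m : ℕ} {Ξ : Set (Rn m)} {Q : Rn m → ℝ} (hcone : IsPosCone Ξ) {R N : ℝ}
    (hR : 0 < R) (hRN : R ≤ N) (hmono : ∀ z ∈ Ξ, R ≤ ‖z‖ → Q ((1 / 2 : ℝ) • z) ≤ 1 * Q z) :
    ∀ z ∈ Ξ, ∃ z' ∈ Ξ, Q z' ≤ Q z ∧ ‖z'‖ ≤ N ∧ (z' = z ∨ N / 2 ≤ ‖z'‖) := by
  intro z hz
  obtain ⟨j, hj⟩ := pow_unbounded_of_one_lt (‖z‖ / N) (one_lt_two)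
  refine halving hcone hRN hmono j z hz ?_
  rw [div_lt_iff₀ (by linarith)] at hj
  exact hj.le

lemma int_finite {m : ℕ} {P : Measure (Rn m)} {Ξ : Set (Rn m)} {Q : Rn m → ℝ} {q : ℝ → ℝ}
    {lam : Rn m → ℝ} {α : ℝ} (hA1 : Assumption1 P Ξ Q q lam α) {δ : ℝ} (hδ : 0 < δ) :
    ∫⁻ z in Ξ, ENNReal.ofReal (Real.exp (-(δ * Q z))) < ⊤ := by
  obtain ⟨hP, hne, hcl, hcone, hP1, hsup, hden, hα, hq, hM, hlam⟩ := id hA1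
  obtain ⟨t, ht, htδ⟩ : ∃ t : ℝ, 0 < t ∧ t ^ α < δ := by
    refine ⟨(δ / 2) ^ (1 / α), by positivity, ?_⟩
    rw [← Real.rpow_mul (by positivity), one_div_mul_cancel hα.ne', Real.rpow_one]
    linarith
  obtain ⟨R, hR, hQ⟩ := Q_scale hA1 ht htδ
  set F : Rn m → ENNReal := fun z => ENNReal.ofReal (Real.exp (-(δ * Q z))) with hF
  set f : Rn m → ENNReal :=
    fun z => ENNReal.ofReal (Ξ.indicator (fun z' => Real.exp (-(Q z'))) z) with hf
  have hf1 : ∫⁻ z, f z = 1 := by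
    have := hP.measure_univ
    rw [hden, withDensity_apply _ MeasurableSet.univ, Measure.restrict_univ] at this
    exact this
  have hΞm := hcl.measurableSet
  have hsub : Ξ ⊆ (Ξ ∩ Metric.ball 0 R) ∪ (Ξ \ Metric.ball 0 R) := by
    rw [inter_union_sdiff]
  refine lt_of_le_of_lt (lintegral_mono_set hsub) (lt_of_le_of_lt (lintegral_union_le _ _ _) ?_)
  refine ENNReal.add_lt_top.2 ⟨?_, ?_⟩
  · calc ∫⁻ z in Ξ ∩ Metric.ball 0 R, F z ≤ ∫⁻ z in Ξ ∩ Metric.ball 0 R, 1 := by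
          refine setLIntegral_mono' (hΞm.inter measurableSet_ball) fun z hz => ?_
          rw [hF, ← ENNReal.ofReal_one]
          refine ENNReal.ofReal_le_ofReal (Real.exp_le_one_iff.2 ?_)
          have := hM.1 z hz.1
          nlinarith
      _ = volume (Ξ ∩ Metric.ball 0 R) := by simp
      _ ≤ volume (Metric.ball (0 : Rn m) R) := measure_mono inter_subset_right
      _ < ⊤ := measure_ball_lt_top
  · calc ∫⁻ z in Ξ \ Metric.ball 0 R, F z ≤ ∫⁻ z in Ξ \ Metric.ball 0 R, f (t • z) := by
          refine setLIntegral_mono' (hΞm.diff measurableSet_ball) fun z hz => ?_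
          have h1 : R ≤ ‖z‖ := by
            have := hz.2
            simpa using this
          have h2 : t • z ∈ Ξ := hcone t ht z hz.1
          simp only [hF, hf, indicator_of_mem h2]
          refine ENNReal.ofReal_le_ofReal (Real.exp_le_exp.2 ?_)
          linarith [hQ z hz.1 h1]
      _ ≤ ∫⁻ z, f (t • z) := setLIntegral_le_lintegral _ _
      _ = ∫⁻ z, f z ∂(Measure.map (fun z => t • z) volume) := by
          have := lintegral_map_equiv (μ := (volume : Measure (Rn m))) f
            (Homeomorph.smulOfNeZero t ht.ne').toMeasurableEquiv
          exact this.symm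
      _ = ENNReal.ofReal |(t ^ Module.finrank ℝ (Rn m))⁻¹| * 1 := by
          rw [show (fun z : Rn m => t • z) = (t • ·) from rfl, Measure.map_addHaar_smul _ ht.ne',
            lintegral_smul_measure, hf1, smul_eq_mul]
      _ < ⊤ := by simp

lemma P_compl {m : ℕ} {P : Measure (Rn m)} {Ξ : Set (Rn m)} {Q : Rn m → ℝ} {q : ℝ → ℝ}
    {lam : Rn m → ℝ} {α : ℝ} (hA1 : Assumption1 P Ξ Q q lam α) : P Ξᶜ = 0 := by
  obtain ⟨hP, hne, hcl, hcone, hP1, -⟩ := hA1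
  exact (prob_compl_eq_zero_iff hcl.measurableSet).2 hP1

lemma P_inter {m : ℕ} {P : Measure (Rn m)} {Ξ : Set (Rn m)} {Q : Rn m → ℝ} {q : ℝ → ℝ}
    {lam : Rn m → ℝ} {α : ℝ} (hA1 : Assumption1 P Ξ Q q lam α) (A : Set (Rn m)) :
    P A ≤ P (A ∩ Ξ) := by
  calc P A ≤ P ((A ∩ Ξ) ∪ Ξᶜ) := measure_mono fun z hz => by
        by_cases h : z ∈ Ξ
        · exact Or.inl ⟨hz, h⟩
        · exact Or.inr h
    _ ≤ P (A ∩ Ξ) + P Ξᶜ := measure_union_le _ _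
    _ = P (A ∩ Ξ) := by rw [P_compl hA1, add_zero]

lemma supp_pos {m : ℕ} {P : Measure (Rn m)} {Ξ : Set (Rn m)} {Q : Rn m → ℝ} {q : ℝ → ℝ}
    {lam : Rn m → ℝ} {α : ℝ} (hA1 : Assumption1 P Ξ Q q lam α) {z : Rn m} (hz : z ∈ Ξ)
    {r : ℝ} (hr : 0 < r) : P (Metric.ball z r ∩ Ξ) ≠ 0 := by
  intro h0
  have h1 : P (Metric.ball z r) = 0 := le_antisymm ((P_inter hA1 _).trans h0.le) bot_le
  obtain ⟨hP, hne, hcl, hcone, hP1, hsup, -⟩ := hA1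
  have := hsup (Metric.ball z r)ᶜ Metric.isOpen_ball.isClosed_compl
    ((prob_compl_eq_one_iff measurableSet_ball).2 h1) hz
  exact this (Metric.mem_ball_self hr)

lemma P_lower {m : ℕ} {P : Measure (Rn m)} {Ξ : Set (Rn m)} {Q : Rn m → ℝ} {q : ℝ → ℝ}
    {lam : Rn m → ℝ} {α : ℝ} (hA1 : Assumption1 P Ξ Q q lam α) {D : Set (Rn m)}
    (hD : MeasurableSet D) (hDΞ : D ⊆ Ξ) {M : ℝ} (hQ : ∀ z ∈ D, Q z ≤ M) :
    ENNReal.ofReal (Real.exp (-M)) * volume D ≤ P D := by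
  obtain ⟨hP, hne, hcl, hcone, hP1, hsup, hden, -⟩ := hA1
  rw [hden, withDensity_apply _ hD, ← setLIntegral_const]
  refine setLIntegral_mono' hD fun z hz => ?_
  rw [indicator_of_mem (hDΞ hz)]
  exact ENNReal.ofReal_le_ofReal (Real.exp_le_exp.2 (by linarith [hQ z hz]))

lemma P_upper {m : ℕ} {P : Measure (Rn m)} {Ξ : Set (Rn m)} {Q : Rn m → ℝ} {q : ℝ → ℝ}
    {lam : Rn m → ℝ} {α : ℝ} (hA1 : Assumption1 P Ξ Q q lam α) {δ : ℝ} (hδ1 : δ ≤ 1)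
    {D : Set (Rn m)}
    (hD : MeasurableSet D) (hDΞ : D ⊆ Ξ) {M : ℝ} (hQ : ∀ z ∈ D, M ≤ Q z) :
    P D ≤ ENNReal.ofReal (Real.exp (-((1 - δ) * M))) *
      ∫⁻ z in Ξ, ENNReal.ofReal (Real.exp (-(δ * Q z))) := by
  obtain ⟨hP, hne, hcl, hcone, hP1, hsup, hden, -⟩ := hA1
  rw [hden, withDensity_apply _ hD, ← lintegral_const_mul' _ _ ENNReal.ofReal_ne_top]
  refine le_trans ?_ (lintegral_mono_set hDΞ)
  refine setLIntegral_mono' hD fun z hz => ?_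
  rw [indicator_of_mem (hDΞ hz), ← ENNReal.ofReal_mul (Real.exp_nonneg _), ← Real.exp_add]
  refine ENNReal.ofReal_le_ofReal (Real.exp_le_exp.2 ?_)
  nlinarith [hQ z hz]

lemma vol_pos {m : ℕ} {P : Measure (Rn m)} {Ξ : Set (Rn m)} {Q : Rn m → ℝ} {q : ℝ → ℝ}
    {lam : Rn m → ℝ} {α : ℝ} (hA1 : Assumption1 P Ξ Q q lam α) {z : Rn m} (hz : z ∈ Ξ)
    {r : ℝ} (hr : 0 < r) : volume (Metric.ball z r ∩ Ξ) ≠ 0 := by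
  intro h0
  refine supp_pos hA1 hz hr ?_
  obtain ⟨hP, hne, hcl, hcone, hP1, hsup, hden, -⟩ := hA1
  rw [hden]
  exact withDensity_absolutelyContinuous _ _ h0

lemma meas_viol {n m : ℕ} {X : Set (Rn n)} {Ξ : Set (Rn m)} {g : Rn n → Rn m → ℝ} {γ ρ : ℝ}
    {gs : Rn n → Rn m → ℝ} (hA2 : Assumption2 X Ξ g γ ρ gs) {p : Rn n} (hp : p ∈ X) :
    MeasurableSet ({z | 0 < g p z} ∩ Ξ) := by
  obtain ⟨⟨h1, h2, h3, h4, h5, h6, h7, h8, h9⟩, -⟩ := hA2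
  obtain ⟨U, hU, h⟩ := continuousOn_iff'.1 (h9 p hp) (Ioi 0) isOpen_Ioi
  have : {z | 0 < g p z} ∩ Ξ = U ∩ Ξ := h
  rw [this]
  exact hU.measurableSet.inter h5.measurableSet

lemma limit_robust {n m : ℕ} {P : Measure (Rn m)} {Ξ : Set (Rn m)} {Q : Rn m → ℝ} {q : ℝ → ℝ}
    {lam : Rn m → ℝ} {α : ℝ} (hA1 : Assumption1 P Ξ Q q lam α)
    {X : Set (Rn n)} {g : Rn n → Rn m → ℝ} {γ ρ : ℝ}
    {gs : Rn n → Rn m → ℝ} (hA2 : Assumption2 X Ξ g γ ρ gs) {v : ℕ → Rn n} {p : Rn n}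
    (hv : ∀ k, v k ∈ X) (hp : p ∈ X) (hvp : Tendsto v atTop (𝓝 p))
    (hP : Tendsto (fun k => P ({z | 0 < g (v k) z} ∩ Ξ)) atTop (𝓝 0)) :
    ∀ z ∈ Ξ, g p z ≤ 0 := by
  obtain ⟨⟨h1, h2, h3, h4, h5, h6, h7, h8, h9⟩, -⟩ := hA2
  have hnull : P ({z | 0 < g p z} ∩ Ξ) = 0 := by
    have hsub : ({z | 0 < g p z} ∩ Ξ) ⊆ ⋃ K : ℕ, {z | z ∈ Ξ ∧ ∀ k ≥ K, 0 < g (v k) z} := by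
      rintro z ⟨hz0, hz⟩
      have hl := h8 z hz p hp 0 hz0
      have hl' := (tendsto_nhdsWithin_iff.2 ⟨hvp, Eventually.of_forall hv⟩).eventually hl
      obtain ⟨K, hK⟩ := eventually_atTop.1 hl'
      exact mem_iUnion.2 ⟨K, hz, hK⟩
    refine measure_mono_null hsub (measure_iUnion_null fun K => ?_)
    refine le_antisymm (ge_of_tendsto hP ?_) bot_le
    filter_upwards [eventually_ge_atTop K] with k hk
    exact measure_mono fun z hz => ⟨hz.2 k hk, hz.1⟩
  intro z hz
  by_contra hh
  push Not at hh
  have := (h9 p hp z hz).eventually (lt_mem_nhds hh)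
  obtain ⟨r, hr, hb⟩ := Metric.mem_nhdsWithin_iff.1 this
  refine supp_pos hA1 hz hr (measure_mono_null ?_ hnull)
  exact fun a ha => ⟨hb ha, ha.2⟩

open scoped Pointwise in
lemma lower_claim {n m : ℕ} {P : Measure (Rn m)} {Ξ : Set (Rn m)} {Q : Rn m → ℝ} {q : ℝ → ℝ}
    {lam : Rn m → ℝ} {α : ℝ} (hA1 : Assumption1 P Ξ Q q lam α)
    {X : Set (Rn n)} {g : Rn n → Rn m → ℝ} {γ ρ : ℝ}
    {gs : Rn n → Rn m → ℝ} (hA2 : Assumption2 X Ξ g γ ρ gs) {x : ℕ → Rn n} {y : Rn n}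
    {u : ℕ → ℝ} (hx : ∀ k, x k ∈ X) (hu : Tendsto u atTop atTop)
    (hxy : Tendsto (fun k => (u k ^ γ)⁻¹ • x k) atTop (𝓝 y)) {w : Rn m} (hw : w ∈ Ξ)
    (hyw : 0 < gs y w) {Λ : ℝ} (hΛ : lam w < Λ) :
    ∃ κ > 0, ∀ᶠ k in atTop,
      ENNReal.ofReal (κ * Real.exp (-(Λ * q (u k)))) ≤ P {z | 0 < g (x k) z} := by
  obtain ⟨hP, hne, hcl, hcone, hP1, hsup, hden, hα, hq, hM, hlam⟩ := id hA1
  obtain ⟨r, hr, hev⟩ : ∃ r > 0, ∀ᶠ k in atTop, ∀ w' ∈ Metric.ball w r ∩ Ξ,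
      0 < u k → 0 < g (x k) (u k • w') ∧ Q (u k • w') ≤ Λ * q (u k) := by
    by_contra hcon
    push Not at hcon
    have hfr : ∀ j : ℕ, ∃ᶠ k in atTop, ∃ w' ∈ Metric.ball w ((j : ℝ) + 1)⁻¹ ∩ Ξ, 0 < u k ∧
        (0 < g (x k) (u k • w') → Λ * q (u k) < Q (u k • w')) := fun j =>
      hcon _ (by positivity)
    obtain ⟨φ, hφ, hb⟩ := extraction_forall_of_frequently hfr
    choose w' hw' hup hbad using hb
    have hlim : Tendsto w' atTop (𝓝 w) := by
      rw [tendsto_iff_dist_tendsto_zero]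
      exact squeeze_zero (fun _ => dist_nonneg) (fun j => (hw' j).1.le)
        (tendsto_inv_atTop_zero.comp tendsto_nat1)
    have huφ := hu.comp hφ.tendsto_atTop
    have l1 := A2seq hA2 hw huφ (x := x ∘ φ) (z := fun j => u (φ j) • w' j) (fun k => hx _)
      (fun j => hcone _ (hup j) _ (hw' j).2) (hxy.comp hφ.tendsto_atTop) (by
        refine hlim.congr fun j => ?_
        simp only [Function.comp_apply]
        rw [smul_smul, inv_mul_cancel₀ (hup j).ne', one_smul])
    have l2 := MRVseq hM hw huφ (fun j => (hw' j).2) hlim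
    obtain ⟨j, hj1, hj2⟩ := ((l1.eventually (lt_mem_nhds hyw)).and
      (l2.eventually (gt_mem_nhds hΛ))).exists
    simp only [Function.comp_apply] at hj1 hj2
    have e1 : 0 < g (x (φ j)) (u (φ j) • w' j) := by
      by_contra hh
      push Not at hh
      exact absurd hj1 (not_lt.2 (div_nonpos_of_nonpos_of_nonneg hh
        (Real.rpow_nonneg (hup j).le _)))
    have e2 := hbad j e1
    rw [div_lt_iff₀ (hq.1 _ (hup j))] at hj2
    linarith
  set D := Metric.ball w r ∩ Ξ with hDdef
  have hDm : MeasurableSet D := measurableSet_ball.inter hcl.measurableSet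
  have hD0 : volume D ≠ 0 := vol_pos hA1 hw hr
  have hDt : volume D ≠ ⊤ := ((measure_mono inter_subset_left).trans_lt measure_ball_lt_top).ne
  refine ⟨(volume D).toReal, ENNReal.toReal_pos hD0 hDt, ?_⟩
  filter_upwards [hev, hu.eventually_ge_atTop 1] with k hk hk1
  have hk0 : 0 < u k := by linarith
  have hsm : MeasurableSet (u k • D) := hDm.const_smul₀ (u k)
  have hsub : u k • D ⊆ Ξ := by
    rintro _ ⟨a, ha, rfl⟩
    exact hcone _ hk0 _ ha.2
  have hlow := P_lower hA1 hsm hsub (M := Λ * q (u k)) (by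
    rintro _ ⟨a, ha, rfl⟩
    exact (hk a ha hk0).2)
  calc _ = ENNReal.ofReal (Real.exp (-(Λ * q (u k)))) * volume D := by
        rw [mul_comm, ENNReal.ofReal_mul (Real.exp_nonneg _), ENNReal.ofReal_toReal hDt]
    _ ≤ ENNReal.ofReal (Real.exp (-(Λ * q (u k)))) * volume (u k • D) := by
        refine mul_le_mul' le_rfl ?_
        rw [Measure.addHaar_smul_of_nonneg _ hk0.le]
        refine le_mul_of_one_le_left bot_le ?_
        rw [ENNReal.one_le_ofReal]
        exact one_le_pow₀ hk1
    _ ≤ P (u k • D) := hlow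
    _ ≤ _ := by
        refine measure_mono ?_
        rintro _ ⟨a, ha, rfl⟩
        exact (hk a ha hk0).1

lemma upper_claim {n m : ℕ} {P : Measure (Rn m)} {Ξ : Set (Rn m)} {Q : Rn m → ℝ} {q : ℝ → ℝ}
    {lam : Rn m → ℝ} {α : ℝ} (hA1 : Assumption1 P Ξ Q q lam α)
    {X : Set (Rn n)} {g : Rn n → Rn m → ℝ} {γ ρ : ℝ}
    {gs : Rn n → Rn m → ℝ} (hA2 : Assumption2 X Ξ g γ ρ gs) {x : ℕ → Rn n} {y : Rn n}
    {u : ℕ → ℝ} (hx : ∀ k, x k ∈ X) (hu : Tendsto u atTop atTop)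
    (hxy : Tendsto (fun k => (u k ^ γ)⁻¹ • x k) atTop (𝓝 y)) {I J : ℝ}
    (hI0 : 0 < I)
    (hI : ∀ w ∈ Ξ, 0 ≤ gs y w → I ≤ lam w) (hJ : J < I) :
    ∀ᶠ k in atTop, ∀ z ∈ Ξ, 0 < g (x k) z → J * q (u k) ≤ Q z := by
  obtain ⟨hP, hne, hcl, hcone, hP1, hsup, hden, hα, hq, hM, hlam⟩ := id hA1
  obtain ⟨c, hc, hlow⟩ := lam_lower hA1
  obtain ⟨R, hR, hmono⟩ := Q_scale hA1 (t := 1 / 2) (δ := 1) (by norm_num)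
    (Real.rpow_lt_one (by norm_num) (by norm_num) hα)
  -- choice of the truncation radius
  set B := 2 * (I / c) ^ (1 / α) with hB
  have hBpos : 0 < B := by positivity
  have hBc : ∀ t : ℝ, B / 2 ≤ t → I ≤ c * t ^ α := by
    intro t ht
    have h1 : (B / 2) ^ α = I / c := by
      rw [hB, mul_div_cancel_left₀ _ two_ne_zero, ← Real.rpow_mul (by positivity),
        one_div_mul_cancel hα.ne', Real.rpow_one]
    have h2 : I / c ≤ t ^ α := by
      rw [← h1]
      exact Real.rpow_le_rpow (by positivity) ht hα.le
    rw [div_le_iff₀ hc] at h2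
    linarith
  by_contra hcon
  have hfr : ∃ᶠ k in atTop, ∃ z ∈ Ξ, 0 < g (x k) z ∧ Q z < J * q (u k) := by
    rw [not_eventually] at hcon
    refine hcon.mono fun k hk => ?_
    push Not at hk
    exact hk
  have hfr2 := hfr.and_eventually ((hu.eventually_ge_atTop (R / B)).and (hu.eventually_gt_atTop 0))
  obtain ⟨φ, hφ, hb⟩ := extraction_of_frequently_atTop hfr2
  have hup : ∀ j, 0 < u (φ j) := fun j => (hb j).2.2
  have hRN : ∀ j, R ≤ B * u (φ j) := fun j => by
    have := (hb j).2.1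
    rw [div_le_iff₀ hBpos] at this
    linarith
  choose z hz hzg hzQ using fun j => (hb j).1
  choose z' hz' hQ' hN' hor using fun j => halving' hcone hR (hRN j) hmono (z j) (hz j)
  have hball : ∀ j, (u (φ j))⁻¹ • z' j ∈ Metric.closedBall (0 : Rn m) B := fun j => by
    rw [mem_closedBall_zero_iff, norm_smul, norm_inv, Real.norm_of_nonneg (hup j).le,
      inv_mul_le_iff₀ (hup j)]
    linarith [hN' j]
  have hmem : ∀ j, (u (φ j))⁻¹ • z' j ∈ Ξ := fun j => hcone _ (inv_pos.2 (hup j)) _ (hz' j)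
  obtain ⟨w, -, ψ, hψ, hw⟩ := (isCompact_closedBall (0 : Rn m) B).tendsto_subseq hball
  have hwΞ : w ∈ Ξ := hcl.mem_of_tendsto hw (Eventually.of_forall fun k => hmem _)
  have hφψ : Tendsto (φ ∘ ψ) atTop atTop := hφ.tendsto_atTop.comp hψ.tendsto_atTop
  have l1 := A2seq hA2 hwΞ (hu.comp hφψ) (x := x ∘ φ ∘ ψ) (z := z' ∘ ψ) (fun k => hx _)
    (fun j => hz' _) (hxy.comp hφψ) hw
  have l2 := MRVseq hM hwΞ (hu.comp hφψ) (fun j => hmem (ψ j)) hw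
  have hle : lam w ≤ J := by
    refine le_of_tendsto' l2 fun j => ?_
    simp only [Function.comp_apply]
    rw [smul_smul, mul_inv_cancel₀ (hup _).ne', one_smul, div_le_iff₀ (hq.1 _ (hup _))]
    exact (hQ' _).trans (hzQ _).le
  have hge : I ≤ lam w := by
    by_cases hgw : 0 ≤ gs y w
    · exact hI w hwΞ hgw
    · push Not at hgw
      have hev := l1.eventually (gt_mem_nhds hgw)
      have hnorm : B / 2 ≤ ‖w‖ := by
        refine ge_of_tendsto hw.norm ?_
        filter_upwards [hev] with j hj
        simp only [Function.comp_apply] at hj ⊢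
        rcases hor (ψ j) with h | h
        · rw [h] at hj
          exact absurd hj (not_lt.2 (div_nonneg (hzg (ψ j)).le (Real.rpow_nonneg (hup _).le _)))
        · rw [norm_smul, norm_inv, Real.norm_of_nonneg (hup _).le, le_inv_mul_iff₀ (hup _)]
          linarith
      exact (hBc _ hnorm).trans (hlow w hwΞ)
  linarith

lemma core2 {n m : ℕ} {P : Measure (Rn m)} {Ξ : Set (Rn m)} {Q : Rn m → ℝ} {q : ℝ → ℝ}
    {lam : Rn m → ℝ} {α : ℝ} (hA1 : Assumption1 P Ξ Q q lam α)
    {X : Set (Rn n)} {g : Rn n → Rn m → ℝ} {γ ρ : ℝ}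
    {gs : Rn n → Rn m → ℝ} (hA2 : Assumption2 X Ξ g γ ρ gs) {s : ℝ} (hs : 1 ≤ s)
    {c : ℝ} (hc0 : 0 < c) (hc1 : c < 1) {ε : ℕ → ℝ} (hε : ∀ k, 0 < ε k)
    (hε0 : Tendsto ε atTop (𝓝 0)) {x : ℕ → Rn n} (hx : ∀ k, x k ∈ X)
    (hxs : ∀ k, s ^ (-γ) • x k ∈ X)
    (hfeas : ∀ k, P {z | 0 < g (s ^ (-γ) • x k) z} ≤ ENNReal.ofReal (ε k ^ (1 / s ^ α)))
    (hbad : ∀ k, ENNReal.ofReal (ε k ^ c) < P {z | 0 < g (x k) z})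
    {u : ℕ → ℝ} (hu : Tendsto u atTop atTop) {y : Rn n} (hy0 : y ≠ 0)
    (hxy : Tendsto (fun k => (u k ^ γ)⁻¹ • x k) atTop (𝓝 y)) : False := by
  obtain ⟨hP, hne, hcl, hcone, hP1, hsup, hden, hα, hq, hM, hlam⟩ := id hA1
  have hs0 : 0 < s := by linarith
  have hy := mem_asymCone_of_tendsto hu hx hxy
  set δ : ℝ := (1 - c) / 10 with hδdef
  have hδ : 0 < δ := by rw [hδdef]; linarith
  have hδ1 : δ < 1 / 10 := by rw [hδdef]; linarith
  -- the rate
  set S : Set (Rn m) := {w | w ∈ Ξ ∧ 0 ≤ gs y w} with hS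
  have hSne : (lam '' S).Nonempty := by
    obtain ⟨w, hw, hwp⟩ := hA2.2.2.2.2.2.2.1 y ⟨hy, hy0⟩
    exact ⟨_, w, ⟨hw, hwp.le⟩, rfl⟩
  set I := sInf (lam '' S) with hIdef
  have hIle : ∀ w ∈ Ξ, 0 ≤ gs y w → I ≤ lam w := fun w hw hwp =>
    csInf_le ⟨0, by rintro _ ⟨a, ha, rfl⟩; exact hM.2.1 a ha.1⟩ ⟨w, ⟨hw, hwp⟩, rfl⟩
  have hI0 : 0 < I := by
    obtain ⟨r, hr, hsm⟩ := gs_small hA2 hy hy0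
    obtain ⟨b, hb, hlow⟩ := lam_lower hA1
    have : b * r ^ α ≤ I := by
      refine le_csInf hSne ?_
      rintro _ ⟨w, hw, rfl⟩
      refine le_trans ?_ (hlow w hw.1)
      have : r ≤ ‖w‖ := by
        by_contra hh
        push Not at hh
        exact absurd (hsm w hw.1 hh) (not_lt.2 hw.2)
      gcongr
    exact lt_of_lt_of_le (by positivity) this
  obtain ⟨w, hw, hyw, hlw⟩ : ∃ w ∈ Ξ, 0 < gs y w ∧ lam w < (1 + 2 * δ) * I := by
    obtain ⟨_, ⟨w1, hw1, rfl⟩, hlt⟩ := exists_lt_of_csInf_lt hSne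
      (show I < (1 + δ) * I by nlinarith)
    have hl1 : 0 < lam w1 := lt_of_lt_of_le hI0 (hIle w1 hw1.1 hw1.2)
    have hrat : 1 < (1 + δ) * I / lam w1 := by rwa [one_lt_div hl1]
    set t := ((1 + δ) * I / lam w1) ^ (1 / α) with ht
    have ht1 : 1 < t := Real.one_lt_rpow hrat (by positivity)
    have htα : t ^ α = (1 + δ) * I / lam w1 := by
      rw [ht, ← Real.rpow_mul (by linarith), one_div_mul_cancel hα.ne', Real.rpow_one]
    refine ⟨t • w1, hcone t (by linarith) w1 hw1.1, gs_push hA2 hw1.1 hy hy0 hw1.2 ht1, ?_⟩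
    rw [lam_hom hA1 hw1.1 (by linarith), htα, div_mul_cancel₀ _ hl1.ne']
    nlinarith
  -- lower bound at the scaled points
  have hu' : Tendsto (fun k => u k / s) atTop atTop := hu.atTop_div_const hs0
  have hxy' : Tendsto (fun k => ((u k / s) ^ γ)⁻¹ • (s ^ (-γ) • x k)) atTop (𝓝 y) := by
    refine hxy.congr' ?_
    filter_upwards [hu.eventually_gt_atTop 0] with k hk
    rw [smul_smul, Real.div_rpow hk.le hs0.le, Real.rpow_neg hs0.le, inv_div]
    congr 1
    have h1 : s ^ γ ≠ 0 := (Real.rpow_pos_of_pos hs0 _).ne'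
    have h2 : u k ^ γ ≠ 0 := (Real.rpow_pos_of_pos hk _).ne'
    field_simp
  obtain ⟨κ, hκ, hlower⟩ := lower_claim hA1 hA2 hxs hu' hxy' hw hyw hlw
  -- upper bound
  have hupper := upper_claim hA1 hA2 hx hu hxy hI0 hIle
    (show (1 - δ) * I < I by nlinarith)
  have hCfin := int_finite hA1 hδ
  set C := (∫⁻ z in Ξ, ENNReal.ofReal (Real.exp (-(δ * Q z)))).toReal with hC
  -- regular variation of q
  have hSpos : 0 < s ^ α := Real.rpow_pos_of_pos hs0 _
  have hqr := ((hq.2 s hs0).comp hu').eventually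
    (lt_mem_nhds (show (1 - δ) * s ^ α < s ^ α by nlinarith))
  have hL : Tendsto (fun k => Real.log (ε k)) atTop atBot :=
    Real.tendsto_log_nhdsGT_zero.comp
      (tendsto_nhdsWithin_iff.2 ⟨hε0, Eventually.of_forall hε⟩)
  obtain ⟨k, hk1, hk2, hk3, hk4, hk5⟩ := (hlower.and (hupper.and (hqr.and
    ((hu.eventually_gt_atTop 0).and (hL.eventually_lt_atBot
      (-((Real.log C - (1 - 5 * δ) * (s ^ α * Real.log κ)) / ((1 - c) / 2)))))))).exists
  simp only [Function.comp_apply] at hk3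
  have hεk := hε k
  set a := q (u k / s) with ha
  have ha0 : 0 < a := hq.1 _ (div_pos hk4 hs0)
  rw [div_mul_cancel₀ _ hs0.ne', lt_div_iff₀ ha0] at hk3
  -- (a)
  have fa : Real.log κ - (1 + 2 * δ) * I * a ≤ 1 / s ^ α * Real.log (ε k) := by
    have h1 := hk1.trans (hfeas k)
    rw [ENNReal.ofReal_le_ofReal_iff (Real.rpow_nonneg hεk.le _)] at h1
    have h2 := Real.log_le_log (by positivity) h1
    rw [Real.log_mul hκ.ne' (Real.exp_ne_zero _), Real.log_exp, Real.log_rpow hεk] at h2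
    linarith
  -- (b)
  have fb : c * Real.log (ε k) < -((1 - δ) * ((1 - δ) * I * q (u k))) + Real.log C := by
    have h1 := P_upper hA1 (δ := δ) (by linarith) (meas_viol hA2 (hx k)) inter_subset_right
      (M := (1 - δ) * I * q (u k)) (fun z hz => hk2 z hz.2 hz.1)
    have h2 := ((hbad k).trans_le (P_inter hA1 _)).trans_le h1
    rw [← ENNReal.ofReal_toReal hCfin.ne, ← hC, ← ENNReal.ofReal_mul (Real.exp_nonneg _),
      ENNReal.ofReal_lt_ofReal_iff_of_nonneg (Real.rpow_nonneg hεk.le _)] at h2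
    have hCpos : 0 < C := by
      by_contra hh
      push Not at hh
      have := Real.rpow_pos_of_pos hεk c
      nlinarith [Real.exp_pos (-((1 - δ) * ((1 - δ) * I * q (u k))))]
    have h3 := Real.log_lt_log (Real.rpow_pos_of_pos hεk c) h2
    rwa [Real.log_rpow hεk, Real.log_mul (Real.exp_ne_zero _) hCpos.ne', Real.log_exp] at h3
  -- conclusion
  set l := Real.log (ε k) with hl
  set S' := s ^ α with hS'
  set T := S' * I * a with hT
  have hTpos : 0 < T := by positivity
  have f1 : S' * Real.log κ - (1 + 2 * δ) * T ≤ l := by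
    have := mul_le_mul_of_nonneg_left fa hSpos.le
    rw [← mul_assoc, mul_one_div_cancel hSpos.ne', one_mul] at this
    rw [hT]
    linarith
  have f2 : (1 - δ) ^ 3 * T ≤ (1 - δ) * ((1 - δ) * I * q (u k)) := by
    have : 0 ≤ (1 - δ) * ((1 - δ) * I) := by
      have : 0 ≤ 1 - δ := by linarith
      positivity
    have := mul_le_mul_of_nonneg_left hk3.le this
    rw [hT]
    linarith
  have f3 : (1 - 5 * δ) * ((1 + 2 * δ) * T) ≤ (1 - δ) ^ 3 * T := by
    rw [← mul_assoc]
    refine mul_le_mul_of_nonneg_right ?_ hTpos.le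
    nlinarith [sq_nonneg δ, mul_pos hδ hδ, mul_pos (mul_pos hδ hδ) hδ]
  have f4 := mul_le_mul_of_nonneg_left f1 (show 0 ≤ 1 - 5 * δ by linarith)
  have f5 : (Real.log C - (1 - 5 * δ) * (S' * Real.log κ)) < (-l) * ((1 - c) / 2) := by
    rw [← div_lt_iff₀ (by linarith)]
    linarith
  have hcδ : (1 - c) / 2 = 1 - 5 * δ - c := by rw [hδdef]; ring
  rw [hcδ] at f5
  nlinarith

lemma core {n m : ℕ} {P : Measure (Rn m)} {Ξ : Set (Rn m)} {Q : Rn m → ℝ} {q : ℝ → ℝ}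
    {lam : Rn m → ℝ} {α : ℝ} (hA1 : Assumption1 P Ξ Q q lam α)
    {X : Set (Rn n)} {g : Rn n → Rn m → ℝ} {γ ρ : ℝ}
    {gs : Rn n → Rn m → ℝ} (hA2 : Assumption2 X Ξ g γ ρ gs) {s : ℝ} (hs : 1 ≤ s)
    {c : ℝ} (hc0 : 0 < c) (hc1 : c < 1) {ε : ℕ → ℝ} (hε : ∀ k, 0 < ε k)
    (hε0 : Tendsto ε atTop (𝓝 0)) {x : ℕ → Rn n} (hx : ∀ k, x k ∈ X)
    (hxs : ∀ k, s ^ (-γ) • x k ∈ X)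
    (hfeas : ∀ k, P {z | 0 < g (s ^ (-γ) • x k) z} ≤ ENNReal.ofReal (ε k ^ (1 / s ^ α)))
    (hbad : ∀ k, ENNReal.ofReal (ε k ^ c) < P {z | 0 < g (x k) z}) : False := by
  obtain ⟨⟨h1, h2, h3, h4, h5, h6, h7, h8, h9⟩, hγ, hρ, hA, ⟨y₀, hy₀, hy₀0⟩, hC, hD, hE⟩ := id hA2
  have hs0 : 0 < s := by linarith
  have hPx : Tendsto (fun k => P ({z | 0 < g (s ^ (-γ) • x k) z} ∩ Ξ)) atTop (𝓝 0) := by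
    have hpos : 0 < 1 / s ^ α := by positivity
    have h : Tendsto (fun k => ENNReal.ofReal (ε k ^ (1 / s ^ α))) atTop (𝓝 0) := by
      have := ENNReal.tendsto_ofReal (hε0.rpow_const (p := 1 / s ^ α) (Or.inr hpos.le))
      rwa [Real.zero_rpow hpos.ne', ENNReal.ofReal_zero] at this
    exact tendsto_of_tendsto_of_tendsto_of_le_of_le tendsto_const_nhds h (fun _ => bot_le)
      (fun k => (measure_mono inter_subset_left).trans (hfeas k))
  obtain ⟨u, hu, huγ⟩ : ∃ u : ℕ → ℝ, Tendsto u atTop atTop ∧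
      ∀ᶠ k in atTop, u k ^ γ = ‖x k‖ ∧ x k ≠ 0 := by
    rcases lt_or_gt_of_ne hγ with h | h
    · have hz := zero_mem_of_neg h h2 hy₀
      have hxne : ∀ k, x k ≠ 0 := by
        intro k hk
        have hb := hbad k
        rw [hk] at hb
        have : P {z | 0 < g 0 z} ≤ P Ξᶜ := measure_mono fun z hz' hzΞ =>
          absurd (hE h z hzΞ) (not_le.2 hz')
        rw [P_compl hA1] at this
        exact absurd (hb.trans_le this) not_lt_bot
      have hs1 : 1 ≤ s ^ (-γ) := Real.one_le_rpow hs (by linarith)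
      have hx0 : Tendsto (fun k => ‖x k‖) atTop (𝓝 0) := by
        rw [Metric.tendsto_atTop']
        by_contra hcon
        push Not at hcon
        obtain ⟨r, hr, hcon⟩ := hcon
        have hfreq : ∃ᶠ k in atTop, r ≤ ‖x k‖ := by
          rw [frequently_atTop']
          intro N
          obtain ⟨k, hk, hk'⟩ := hcon N
          exact ⟨k, hk, by simpa using hk'⟩
        obtain ⟨φ, hφ, hφr⟩ := extraction_of_frequently_atTop hfreq
        have hnorm : ∀ j, r ≤ ‖s ^ (-γ) • x (φ j)‖ := fun j => by
          rw [norm_smul, Real.norm_of_nonneg (by positivity)]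
          have := hφr j
          nlinarith [norm_nonneg (x (φ j))]
        set v : ℕ → Rn n := fun j => (r / ‖s ^ (-γ) • x (φ j)‖) • (s ^ (-γ) • x (φ j)) with hv
        have ht : ∀ j, r / ‖s ^ (-γ) • x (φ j)‖ ∈ Icc (0 : ℝ) 1 := fun j =>
          ⟨by positivity, (div_le_one (hr.trans_le (hnorm j))).2 (hnorm j)⟩
        have hvX : ∀ j, v j ∈ X := fun j => h3.smul_mem_of_zero_mem hz (hxs _) (ht j)
        have hvn : ∀ j, v j ∈ Metric.sphere (0 : Rn n) r := fun j => by
          rw [mem_sphere_zero_iff_norm, hv]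
          simp only
          rw [norm_smul (r / _), Real.norm_of_nonneg (ht j).1,
            div_mul_cancel₀ _ (hr.trans_le (hnorm j)).ne']
        obtain ⟨p, hp, ψ, hψ, hlim⟩ := (isCompact_sphere (0 : Rn n) r).tendsto_subseq hvn
        have hpX : p ∈ X := h2.mem_of_tendsto hlim (Eventually.of_forall fun j => hvX _)
        refine robust_false hA2 hpX (fun _ => ?_)
          (limit_robust hA1 hA2 (v := v ∘ ψ) (fun j => hvX _) hpX hlim ?_)
        · rintro rfl
          simp at hp
          linarith
        · refine tendsto_of_tendsto_of_tendsto_of_le_of_le tendsto_const_nhds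
            (hPx.comp (hφ.tendsto_atTop.comp hψ.tendsto_atTop)) (fun _ => bot_le) (fun j => ?_)
          refine measure_mono ?_
          rintro z ⟨hz0, hzΞ⟩
          refine ⟨?_, hzΞ⟩
          have hz0 : 0 < g (v (ψ j)) z := hz0
          change 0 < g (s ^ (-γ) • x (φ (ψ j))) z
          obtain ⟨ht0, ht1⟩ := ht (ψ j)
          have hcv := (h7 z hzΞ).2 (hxs (φ (ψ j))) hz ht0 (sub_nonneg.2 ht1) (by ring)
          simp only [smul_zero, add_zero, smul_eq_mul] at hcv
          have hg0 := hE h z hzΞ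
          have h10 : (1 - r / ‖s ^ (-γ) • x (φ (ψ j))‖) * g 0 z ≤ 0 :=
            mul_nonpos_of_nonneg_of_nonpos (sub_nonneg.2 ht1) hg0
          have h11 : 0 < r / ‖s ^ (-γ) • x (φ (ψ j))‖ * g (s ^ (-γ) • x (φ (ψ j))) z := by
            have : 0 < g ((r / ‖s ^ (-γ) • x (φ (ψ j))‖) • s ^ (-γ) • x (φ (ψ j))) z := hz0
            linarith
          exact pos_of_mul_pos_right h11 ht0
      refine ⟨fun k => ‖x k‖ ^ (1 / γ), ?_, Eventually.of_forall fun k => ⟨?_, hxne k⟩⟩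
      · have hinv : Tendsto (fun k => ‖x k‖⁻¹) atTop atTop :=
          tendsto_inv_nhdsGT_zero.comp (tendsto_nhdsWithin_iff.2
            ⟨hx0, Eventually.of_forall fun k => norm_pos_iff.2 (hxne k)⟩)
        have := (tendsto_rpow_atTop (y := -(1 / γ))
          (by have := one_div_neg.2 h; linarith)).comp hinv
        refine this.congr fun k => ?_
        simp only [Function.comp_apply]
        rw [Real.inv_rpow (norm_nonneg _), Real.rpow_neg (norm_nonneg _), inv_inv]
      · rw [← Real.rpow_mul (norm_nonneg _), one_div_mul_cancel hγ, Real.rpow_one]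
    · have hxi : Tendsto (fun k => ‖x k‖) atTop atTop := by
        rw [tendsto_atTop]
        by_contra hcon
        push Not at hcon
        obtain ⟨b, hb⟩ := hcon
        have hfreq : ∃ᶠ k in atTop, ‖x k‖ < b := by simpa using hb
        obtain ⟨φ, hφ, hφb⟩ := extraction_of_frequently_atTop hfreq
        have hmem : ∀ j, s ^ (-γ) • x (φ j) ∈ Metric.closedBall (0 : Rn n) (s ^ (-γ) * b) := by
          intro j
          rw [mem_closedBall_zero_iff, norm_smul, Real.norm_of_nonneg (by positivity)]
          exact mul_le_mul_of_nonneg_left (hφb j).le (by positivity)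
        obtain ⟨p, hp, ψ, hψ, hlim⟩ :=
          (isCompact_closedBall (0 : Rn n) (s ^ (-γ) * b)).tendsto_subseq hmem
        have hpX : p ∈ X := h2.mem_of_tendsto hlim (Eventually.of_forall fun j => hxs _)
        exact robust_false hA2 hpX (fun hh => absurd hh (not_lt.2 h.le))
          (limit_robust hA1 hA2 (v := fun j => s ^ (-γ) • x (φ (ψ j))) (fun j => hxs _) hpX hlim
            (hPx.comp (hφ.tendsto_atTop.comp hψ.tendsto_atTop)))
      refine ⟨fun k => ‖x k‖ ^ (1 / γ), (tendsto_rpow_atTop (by positivity)).comp hxi, ?_⟩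
      filter_upwards [hxi.eventually_gt_atTop 0] with k hk
      refine ⟨?_, norm_pos_iff.1 hk⟩
      rw [← Real.rpow_mul (norm_nonneg _), one_div_mul_cancel hγ, Real.rpow_one]
  obtain ⟨y, hy, φ, hφ, hlim⟩ := (isCompact_sphere (0 : Rn n) 1).tendsto_subseq'
    (x := fun k => (u k ^ γ)⁻¹ • x k) (Eventually.frequently (by
      filter_upwards [huγ] with k hk
      rw [mem_sphere_zero_iff_norm, hk.1, norm_smul, norm_inv, norm_norm,
        inv_mul_cancel₀ (norm_ne_zero_iff.2 hk.2)]))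
  have hy0 : y ≠ 0 := by
    rintro rfl
    simp at hy
  have hφt := hφ.tendsto_atTop
  exact core2 hA1 hA2 hs hc0 hc1 (fun k => hε (φ k)) (hε0.comp hφt) (fun k => hx (φ k))
    (fun k => hxs (φ k)) (fun k => hfeas (φ k)) (fun k => hbad (φ k)) (hu.comp hφt) hy0 hlim

lemma ratio_conv {V : ENNReal} (hV : V ≠ ⊤) {e c : ℝ} (he : 0 < e) (he1 : e < 1)
    (h : ENNReal.log V / ((Real.log e : ℝ) : EReal) < (c : EReal)) :
    ENNReal.ofReal (e ^ c) < V := by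
  by_contra hcon
  push Not at hcon
  have hl : Real.log e < 0 := Real.log_neg he he1
  by_cases hV0 : V = 0
  · rw [hV0, ENNReal.log_zero, EReal.bot_div_of_neg_ne_bot (by exact_mod_cast hl)
      (EReal.coe_ne_bot _)] at h
    exact absurd h not_top_lt
  · rw [ENNReal.log_pos_real hV0 hV, ← EReal.coe_div, EReal.coe_lt_coe_iff, div_lt_iff_of_neg hl] at h
    have hpos := ENNReal.toReal_pos hV0 hV
    have h2 := ENNReal.toReal_le_of_le_ofReal (Real.rpow_nonneg he.le c) hcon
    have h3 := Real.log_le_log hpos h2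
    rw [Real.log_rpow he] at h3
    linarith

/-- Deterministic core of the main theorem: if `(x_ε)` are points of `X` whose
`s^{-γ}`-scalings lie in `X` and satisfy the scenario feasibility guarantee
`P(g(s^{-γ} x_ε, ·) > 0) ≤ ε^{1/s^α}` for small `ε`, then the violation
probability `V(x_ε) = P(g(x_ε, ·) > 0)` satisfies
`liminf_{ε→0⁺} log V(x_ε) / log ε ≥ 1` (in `EReal`, with `log 0 = ⊥`, so the
ratio is `⊤` whenever `V(x_ε) = 0`). -/
theorem asymptotic_feasibility {n m : ℕ} (P : Measure (Rn m)) (Ξ : Set (Rn m))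
    (Q : Rn m → ℝ) (q : ℝ → ℝ) (lam : Rn m → ℝ) (α : ℝ)
    (hA1 : Assumption1 P Ξ Q q lam α)
    (X : Set (Rn n)) (g : Rn n → Rn m → ℝ) (γ ρ : ℝ) (gs : Rn n → Rn m → ℝ)
    (hA2 : Assumption2 X Ξ g γ ρ gs)
    (s : ℝ) (hs : 1 ≤ s)
    (x : ℝ → Rn n)
    (hxX : ∀ ε ∈ Set.Ioo (0 : ℝ) 1, x ε ∈ X)
    (hxsX : ∀ ε ∈ Set.Ioo (0 : ℝ) 1, (s ^ (-γ)) • x ε ∈ X)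
    (hfeas : ∃ ε₀ ∈ Set.Ioo (0 : ℝ) 1, ∀ ε ∈ Set.Ioo (0 : ℝ) ε₀,
      P {z : Rn m | 0 < g ((s ^ (-γ)) • x ε) z} ≤ ENNReal.ofReal (ε ^ (1 / s ^ α))) :
    (1 : EReal) ≤
      Filter.liminf
        (fun ε : ℝ =>
          ENNReal.log (P {z : Rn m | 0 < g (x ε) z}) / ((Real.log ε : ℝ) : EReal))
        (𝓝[>] (0 : ℝ)) := by
  obtain ⟨ε₀, hε₀, hf⟩ := hfeas
  have hP : IsProbabilityMeasure P := hA1.1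
  refine le_of_forall_lt fun a ha => ?_
  obtain ⟨c, hc, hc1⟩ := EReal.lt_iff_exists_real_btwn.1 (max_lt ha (zero_lt_one (α := EReal)))
  have hca : a < (c : EReal) := (le_max_left _ _).trans_lt hc
  have hc0 : 0 < c := by exact_mod_cast (le_max_right _ _).trans_lt hc
  have hc1 : c < 1 := by exact_mod_cast hc1
  refine hca.trans_le (le_liminf_of_le (by isBoundedDefault) ?_)
  by_contra hcon
  rw [not_eventually] at hcon
  have hev : ∀ᶠ ε in 𝓝[>] (0 : ℝ), ε ∈ Set.Ioo (0 : ℝ) ε₀ := Ioo_mem_nhdsGT hε₀.1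
  obtain ⟨e, he, hek⟩ := exists_seq_forall_of_frequently (hcon.and_eventually hev)
  have h01 : ∀ k, e k ∈ Set.Ioo (0 : ℝ) 1 := fun k =>
    ⟨(hek k).2.1, (hek k).2.2.trans hε₀.2⟩
  exact core hA1 hA2 hs hc0 hc1 (ε := e) (x := fun k => x (e k)) (fun k => (h01 k).1)
    (tendsto_nhdsWithin_iff.1 he).1 (fun k => hxX _ (h01 k)) (fun k => hxsX _ (h01 k))
    (fun k => hf _ (hek k).2)
    (fun k => ratio_conv (measure_ne_top P _) (h01 k).1 (h01 k).2 (not_le.1 (hek k).1))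
end
end

section
/- Let X ⊆ ℝ^n be a nonempty closed convex set, Ξ ⊆ ℝ^m a nonempty closed cone, and g : X × Ξ → ℝ such that g(·, z) is convex and lower semicontinuous for each fixed z ∈ Ξ and g(x, ·) is continuous for each fixed x ∈ X. Suppose two triples (γ₁, ρ₁, g₁*) and (γ₂, ρ₂, g₂*), with γ₁, γ₂ ≠ 0 and ρ₁, ρ₂ ≥ 0, both satisfy conditions (A1), (A2), (A3), and (A4) of Assumption 2 for this g. Then γ₁ = γ₂ and ρ₁ = ρ₂. -/
open Filter Topology MeasureTheory Set

noncomputable section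

lemma zero_mem_of_cone {m : ℕ} {Z : Set (Rn m)} (hne : Z.Nonempty) (hcl : IsClosed Z)
    (hc : IsPosCone Z) : (0 : Rn m) ∈ Z := by
  obtain ⟨z, hz⟩ := hne
  have h : Tendsto (fun u : ℝ => u⁻¹ • z) atTop (𝓝 ((0 : ℝ) • z)) :=
    tendsto_inv_atTop_zero.smul_const z
  rw [zero_smul] at h
  refine hcl.mem_of_tendsto h ?_
  filter_upwards [eventually_gt_atTop 0] with u hu
  exact hc _ (inv_pos.2 hu) z hz

lemma asym_pos_rec {n : ℕ} {X : Set (Rn n)} (hcl : IsClosed X) (hcv : Convex ℝ X)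
    {γ : ℝ} (hγ : 0 < γ) {y x0 : Rn n} (hy : y ∈ asymCone X γ) (hx0 : x0 ∈ X)
    {s : ℝ} (hs : 0 ≤ s) : x0 + s • y ∈ X := by
  obtain ⟨a, l, ha, hl, hlt, hlim⟩ := hy
  have ht : Tendsto (fun k => l k ^ γ) atTop atTop := (tendsto_rpow_atTop hγ).comp hlt
  have hinv : Tendsto (fun k => s * (l k ^ γ)⁻¹) atTop (𝓝 (s * 0)) :=
    (tendsto_inv_atTop_zero.comp ht).const_mul s
  have h1 : Tendsto (fun k => (1 - s * (l k ^ γ)⁻¹) • x0 + s • ((l k ^ γ)⁻¹ • a k)) atTop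
      (𝓝 ((1 - s * 0) • x0 + s • y)) :=
    ((tendsto_const_nhds.sub hinv).smul_const x0).add (hlim.const_smul s)
  have h2 : (1 - s * 0) • x0 + s • y = x0 + s • y := by simp
  rw [h2] at h1
  refine hcl.mem_of_tendsto h1 ?_
  filter_upwards [ht.eventually_ge_atTop s, ht.eventually_gt_atTop 0] with k hk hk0
  rw [smul_smul]
  refine hcv hx0 (ha k) ?_ (by positivity) (by ring)
  have : s * (l k ^ γ)⁻¹ ≤ 1 := by
    rw [← div_eq_mul_inv]; exact (div_le_one hk0).2 hk
  linarith

lemma rpow_tendsto_zero_of_neg {γ : ℝ} (hγ : γ < 0) :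
    Tendsto (fun u : ℝ => u ^ γ) atTop (𝓝 0) := by
  simpa using tendsto_rpow_neg_atTop (y := -γ) (by linarith)

lemma asym_neg_zero {n : ℕ} {X : Set (Rn n)} (hcl : IsClosed X)
    {γ : ℝ} (hγ : γ < 0) {y : Rn n} (hy : y ∈ asymCone X γ) : (0 : Rn n) ∈ X := by
  obtain ⟨a, l, ha, hl, hlt, hlim⟩ := hy
  have h := ((rpow_tendsto_zero_of_neg hγ).comp hlt).smul hlim
  rw [zero_smul] at h
  refine hcl.mem_of_tendsto h (Eventually.of_forall fun k => ?_)
  have : l k ^ γ ≠ 0 := (Real.rpow_pos_of_pos (hl k) _).ne'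
  simp [smul_smul, this, ha k]

lemma asym_same_sign {n : ℕ} {X : Set (Rn n)} {γ₁ γ₂ : ℝ} (h : 0 < γ₁ / γ₂) {y : Rn n}
    (hy : y ∈ asymCone X γ₁) : y ∈ asymCone X γ₂ := by
  obtain ⟨a, l, ha, hl, hlt, hlim⟩ := hy
  have h2 : γ₂ ≠ 0 := by rintro rfl; simp at h
  refine ⟨a, fun k => l k ^ (γ₁ / γ₂), ha, fun k => Real.rpow_pos_of_pos (hl k) _,
    (tendsto_rpow_atTop h).comp hlt, ?_⟩
  refine hlim.congr fun k => ?_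
  rw [← Real.rpow_mul (hl k).le, div_mul_cancel₀ _ h2]

/-- A curve in `X` that realizes an asymptotic direction along every rate of the same sign. -/
lemma exists_curve {n : ℕ} {X : Set (Rn n)} (hne : X.Nonempty) (hcl : IsClosed X)
    (hcv : Convex ℝ X) {γ : ℝ} (hγ : γ ≠ 0) {y : Rn n} (hy : y ∈ asymCone X γ) :
    ∃ p : ℝ → Rn n, (∀ t, 0 < t → p t ∈ X) ∧ ∀ γ' : ℝ, 0 < γ / γ' →
      Tendsto (fun u : ℝ => (u ^ γ')⁻¹ • p (u ^ γ')) atTop (𝓝 y) := by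
  rcases lt_or_gt_of_ne hγ with hneg | hpos
  · have h0 := asym_neg_zero hcl hneg hy
    have hex : ∀ t : ℝ, ∃ q ∈ X, Metric.infDist (t • y) X = dist (t • y) q :=
      fun t => hcl.exists_infDist_eq_dist hne _
    choose p hpX hp using hex
    refine ⟨p, fun t _ => hpX t, fun γ' hγ' => ?_⟩
    have hγ'0 : γ' < 0 := by
      by_contra hcon
      exact absurd hγ' (not_lt.2 (div_nonpos_of_nonpos_of_nonneg hneg.le (not_lt.1 hcon)))
    obtain ⟨a, l, ha, hl, hlt, hlim⟩ := hy
    rw [Metric.tendsto_atTop] at hlim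
    rw [Metric.tendsto_nhds]
    intro ε hε
    obtain ⟨N, hN⟩ := hlim ε hε
    have hNN := hN N le_rfl
    have hlp : 0 < l N ^ γ := Real.rpow_pos_of_pos (hl N) _
    filter_upwards [(rpow_tendsto_zero_of_neg hγ'0).eventually_lt_const hlp,
      eventually_gt_atTop 0] with u hu hu0
    have ht : 0 < u ^ γ' := Real.rpow_pos_of_pos hu0 _
    set t := u ^ γ' with htdef
    have hmem : t • ((l N ^ γ)⁻¹ • a N) ∈ X := by
      rw [smul_smul]
      refine hcv.smul_mem_of_zero_mem h0 (ha N) ⟨by positivity, ?_⟩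
      rw [← div_eq_mul_inv]; exact (div_le_one hlp).2 hu.le
    have h1 : dist (t • y) (p t) ≤ dist (t • y) (t • ((l N ^ γ)⁻¹ • a N)) := by
      rw [← hp t]; exact Metric.infDist_le_dist_of_mem hmem
    have h2 : t⁻¹ • p t = t⁻¹ • p t := rfl
    have h3 : dist (t⁻¹ • p t) y = t⁻¹ * dist (t • y) (p t) := by
      have : y = t⁻¹ • (t • y) := by rw [smul_smul, inv_mul_cancel₀ ht.ne', one_smul]
      conv_lhs => rw [this]
      rw [dist_smul₀, dist_comm, Real.norm_of_nonneg (by positivity)]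
    rw [dist_smul₀, Real.norm_of_nonneg ht.le] at h1
    rw [h3]
    calc t⁻¹ * dist (t • y) (p t) ≤ t⁻¹ * (t * dist y ((l N ^ γ)⁻¹ • a N)) := by gcongr
      _ = dist ((l N ^ γ)⁻¹ • a N) y := by rw [dist_comm]; field_simp
      _ < ε := hNN
  · obtain ⟨x0, hx0⟩ := hne
    refine ⟨fun t => x0 + t • y, fun t ht => asym_pos_rec hcl hcv hpos hy hx0 ht.le,
      fun γ' hγ' => ?_⟩
    have hγ'0 : 0 < γ' := by
      by_contra hcon
      exact absurd hγ' (not_lt.2 (div_nonpos_of_nonneg_of_nonpos hpos.le (not_lt.1 hcon)))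
    have h1 := ((tendsto_inv_atTop_zero.comp (tendsto_rpow_atTop hγ'0)).smul_const x0).add_const y
    rw [zero_smul, zero_add] at h1
    refine h1.congr' ?_
    filter_upwards [eventually_gt_atTop 0] with u hu0
    have ht : u ^ γ' ≠ 0 := (Real.rpow_pos_of_pos hu0 _).ne'
    simp [smul_smul, ht]

lemma tendsto_ray {m : ℕ} (w : Rn m) :
    Tendsto (fun u : ℝ => u⁻¹ • (u • w)) atTop (𝓝 w) := by
  refine tendsto_const_nhds.congr' ?_
  filter_upwards [eventually_gt_atTop 0] with u hu
  simp [smul_smul, hu.ne']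

lemma rpow_exp_zero {e c : ℝ} (hc : c ≠ 0)
    (h : Tendsto (fun u : ℝ => u ^ e) atTop (𝓝 c)) : e = 0 := by
  rcases lt_trichotomy e 0 with he | he | he
  · exact absurd (tendsto_nhds_unique h (rpow_tendsto_zero_of_neg he)) hc
  · exact he
  · exact absurd h (not_tendsto_nhds_of_tendsto_atTop (tendsto_rpow_atTop he) _)

/-- Same-sign rates: the ratios agree. -/
lemma same_sign_ratio {n m : ℕ} {X : Set (Rn n)} {Ξ : Set (Rn m)}
    {g : Rn n → Rn m → ℝ} (hreg : GRegular X Ξ g)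
    {γ₁ ρ₁ γ₂ ρ₂ : ℝ} {gs₁ gs₂ : Rn n → Rn m → ℝ} (hs : 0 < γ₁ / γ₂)
    (h₁A1 : CondA1 X Ξ g γ₁ ρ₁ gs₁) (h₁A2 : CondA2 X γ₁)
    (h₁A3 : CondA3 X γ₁ gs₁)
    (h₂A1 : CondA1 X Ξ g γ₂ ρ₂ gs₂)
    (h₂A3 : CondA3 X γ₂ gs₂) : γ₁ / γ₂ * ρ₂ = ρ₁ := by
  obtain ⟨hne, hcl, hcv, hZne, hZcl, hZc, -⟩ := hreg
  have hz0 := zero_mem_of_cone hZne hZcl hZc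
  have h1 : γ₁ ≠ 0 := by rintro rfl; simp at hs
  have h2 : γ₂ ≠ 0 := by rintro rfl; simp at hs
  obtain ⟨y, hy, hy0⟩ := h₁A2
  have hy2 := asym_same_sign hs hy
  obtain ⟨p, hpX, hp⟩ := exists_curve hne hcl hcv h1 hy
  have hzz : Tendsto (fun u : ℝ => u⁻¹ • (0 : Rn m)) atTop (𝓝 0) := by simp
  have T1 := h₁A1.2 y hy 0 hz0 (fun u => p (u ^ γ₁)) (fun _ => 0)
    (fun u hu => hpX _ (Real.rpow_pos_of_pos hu _)) (fun _ _ => hz0)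
    (hp γ₁ (by rw [div_self h1]; norm_num)) hzz
  have T2 := h₂A1.2 y hy2 0 hz0 (fun u => p (u ^ γ₂)) (fun _ => 0)
    (fun u hu => hpX _ (Real.rpow_pos_of_pos hu _)) (fun _ _ => hz0) (hp γ₂ hs) hzz
  have n1 := h₁A3 y ⟨hy, hy0⟩
  have n2 := h₂A3 y ⟨hy2, hy0⟩
  have T3 := T1.div (T2.comp (tendsto_rpow_atTop hs)) n2.ne
  have key : Tendsto (fun u : ℝ => u ^ (γ₁ / γ₂ * ρ₂ - ρ₁)) atTop (𝓝 (gs₁ y 0 / gs₂ y 0)) := by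
    refine T3.congr' ?_
    filter_upwards [eventually_gt_atTop 0, T1.eventually_lt_const n1] with u hu hlt
    have hg : g (p (u ^ γ₁)) 0 ≠ 0 := by
      intro hh; rw [hh] at hlt; simp at hlt
    have e1 : (u ^ (γ₁ / γ₂)) ^ γ₂ = u ^ γ₁ := by
      rw [← Real.rpow_mul hu.le, div_mul_cancel₀ _ h2]
    have e2 : (u ^ (γ₁ / γ₂)) ^ ρ₂ = u ^ (γ₁ / γ₂ * ρ₂) := by rw [← Real.rpow_mul hu.le]
    have hpos := (Real.rpow_pos_of_pos hu ρ₁).ne'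
    have hpos2 := (Real.rpow_pos_of_pos hu (γ₁ / γ₂ * ρ₂)).ne'
    simp only [Pi.div_apply, Function.comp_apply, e1, e2, Real.rpow_sub hu]
    field_simp
  have := rpow_exp_zero (div_ne_zero n1.ne n2.ne) key
  linarith

lemma same_sign_ge {n m : ℕ} {X : Set (Rn n)} {Ξ : Set (Rn m)}
    {g : Rn n → Rn m → ℝ} (hreg : GRegular X Ξ g)
    {γ₁ ρ₁ γ₂ ρ₂ : ℝ} {gs₁ gs₂ : Rn n → Rn m → ℝ} (hs : 0 < γ₁ / γ₂)
    (h₁A1 : CondA1 X Ξ g γ₁ ρ₁ gs₁) (h₁A2 : CondA2 X γ₁)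
    (h₁A3 : CondA3 X γ₁ gs₁)
    (h₂A1 : CondA1 X Ξ g γ₂ ρ₂ gs₂)
    (h₂A3 : CondA3 X γ₂ gs₂) (h₂A4 : CondA4 X Ξ γ₂ gs₂) : 1 ≤ γ₁ / γ₂ := by
  have hrat := same_sign_ratio hreg hs h₁A1 h₁A2 h₁A3 h₂A1 h₂A3
  by_contra! hlt1
  obtain ⟨hne, hcl, hcv, hZne, hZcl, hZc, -⟩ := hreg
  have hz0 := zero_mem_of_cone hZne hZcl hZc
  have h1 : γ₁ ≠ 0 := by rintro rfl; simp at hs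
  have h2 : γ₂ ≠ 0 := by rintro rfl; simp at hs
  obtain ⟨y, hy, hy0⟩ := h₁A2
  have hy2 := asym_same_sign hs hy
  obtain ⟨p, hpX, hp⟩ := exists_curve hne hcl hcv h1 hy
  obtain ⟨w, hw, hwpos⟩ := h₂A4 y ⟨hy2, hy0⟩
  have n1 := h₁A3 y ⟨hy, hy0⟩
  have T2 := h₂A1.2 y hy2 w hw (fun u => p (u ^ γ₂)) (fun u => u • w)
    (fun u hu => hpX _ (Real.rpow_pos_of_pos hu _)) (fun u hu => hZc u hu w hw) (hp γ₂ hs)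
    (tendsto_ray w)
  have hz : Tendsto (fun u : ℝ => u⁻¹ • (u ^ (γ₁ / γ₂) • w)) atTop (𝓝 0) := by
    have h := (rpow_tendsto_zero_of_neg (γ := γ₁ / γ₂ - 1) (by linarith)).smul_const w
    rw [zero_smul] at h
    refine h.congr' ?_
    filter_upwards [eventually_gt_atTop 0] with u hu
    rw [smul_smul, Real.rpow_sub hu, Real.rpow_one, div_eq_inv_mul]
  have T1 := h₁A1.2 y hy 0 hz0 (fun u => p (u ^ γ₁)) (fun u => u ^ (γ₁ / γ₂) • w)
    (fun u hu => hpX _ (Real.rpow_pos_of_pos hu _))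
    (fun u hu => hZc _ (Real.rpow_pos_of_pos hu _) w hw)
    (hp γ₁ (by rw [div_self h1]; norm_num)) hz
  have T3 : Tendsto (fun u : ℝ => g (p (u ^ γ₁)) (u ^ (γ₁ / γ₂) • w) / u ^ ρ₁) atTop
      (𝓝 (gs₂ y w)) := by
    refine (T2.comp (tendsto_rpow_atTop hs)).congr' ?_
    filter_upwards [eventually_gt_atTop 0] with u hu
    have e1 : (u ^ (γ₁ / γ₂)) ^ γ₂ = u ^ γ₁ := by
      rw [← Real.rpow_mul hu.le, div_mul_cancel₀ _ h2]
    have e2 : (u ^ (γ₁ / γ₂)) ^ ρ₂ = u ^ ρ₁ := by rw [← Real.rpow_mul hu.le, hrat]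
    simp only [Function.comp_apply, e1, e2]
  have := tendsto_nhds_unique T1 T3
  linarith

/-- Rates of opposite sign are impossible. -/
lemma opp_sign_false {n m : ℕ} {X : Set (Rn n)} {Ξ : Set (Rn m)}
    {g : Rn n → Rn m → ℝ} (hreg : GRegular X Ξ g)
    {γ₁ ρ₁ γ₂ ρ₂ : ℝ} {gs₁ gs₂ : Rn n → Rn m → ℝ} (hγ₁ : 0 < γ₁) (hγ₂ : γ₂ < 0)
    (hρ₂ : 0 ≤ ρ₂)
    (h₁A1 : CondA1 X Ξ g γ₁ ρ₁ gs₁) (h₁A2 : CondA2 X γ₁)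
    (h₁A3 : CondA3 X γ₁ gs₁)
    (h₂A1 : CondA1 X Ξ g γ₂ ρ₂ gs₂) (h₂A2 : CondA2 X γ₂)
    (h₂A3 : CondA3 X γ₂ gs₂) (h₂A4 : CondA4 X Ξ γ₂ gs₂) : False := by
  obtain ⟨hne, hcl, hcv, hZne, hZcl, hZc, hgcv, hglsc, hgc⟩ := hreg
  have hz0 := zero_mem_of_cone hZne hZcl hZc
  obtain ⟨y, hy, hy0⟩ := h₁A2
  obtain ⟨y', hy', -⟩ := h₂A2
  have h0 := asym_neg_zero hcl hγ₂ hy'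
  have hray : ∀ s : ℝ, 0 ≤ s → s • y ∈ X := fun s hs => by
    simpa using asym_pos_rec hcl hcv hγ₁ hy h0 hs
  have hcurve : ∀ γ : ℝ, Tendsto (fun u : ℝ => (u ^ γ)⁻¹ • (u ^ γ • y)) atTop (𝓝 y) := by
    intro γ
    refine tendsto_const_nhds.congr' ?_
    filter_upwards [eventually_gt_atTop 0] with u hu
    simp [smul_smul, (Real.rpow_pos_of_pos hu γ).ne']
  have hcX : ∀ γ u : ℝ, 0 < u → u ^ γ • y ∈ X := fun γ u hu =>
    hray _ (Real.rpow_pos_of_pos hu γ).le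
  have hy2 : y ∈ asymCone X γ₂ := by
    refine ⟨fun k : ℕ => ((k : ℝ) + 1) ^ γ₂ • y, fun k => (k : ℝ) + 1,
      fun k => hcX _ _ (by positivity), fun k => by positivity, ?_, ?_⟩
    · exact tendsto_atTop_add_const_right _ _ tendsto_natCast_atTop_atTop
    · exact (hcurve γ₂).comp (tendsto_atTop_add_const_right _ 1 tendsto_natCast_atTop_atTop)
  have h0mem : (0 : Rn n) ∈ asymCone X γ₂ :=
    ⟨fun _ => 0, fun k => (k : ℝ) + 1, fun _ => h0, fun k => by positivity,
      tendsto_atTop_add_const_right _ _ tendsto_natCast_atTop_atTop, by simp⟩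
  have n1 := h₁A3 y ⟨hy, hy0⟩
  have n2 := h₂A3 y ⟨hy2, hy0⟩
  have hzz : Tendsto (fun u : ℝ => u⁻¹ • (0 : Rn m)) atTop (𝓝 0) := by simp
  have T2 := h₂A1.2 y hy2 0 hz0 (fun u => u ^ γ₂ • y) (fun _ => 0)
    (fun u hu => hcX _ u hu) (fun _ _ => hz0) (hcurve γ₂) hzz
  -- lower semicontinuity at the origin
  have hto0 : Tendsto (fun u : ℝ => u ^ γ₂ • y) atTop (𝓝[X] 0) := by
    refine tendsto_nhdsWithin_iff.2 ⟨?_, ?_⟩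
    · simpa using (rpow_tendsto_zero_of_neg hγ₂).smul_const y
    · filter_upwards [eventually_gt_atTop 0] with u hu using hcX _ u hu
  have hlsc : ∀ c, c < g 0 0 → ∀ᶠ u : ℝ in atTop, c < g (u ^ γ₂ • y) 0 := fun c hc =>
    hto0.eventually (hglsc 0 hz0 0 h0 c hc)
  have hρ20 : ρ₂ = 0 := by
    by_contra hne0
    have hpos : 0 < ρ₂ := lt_of_le_of_ne hρ₂ (Ne.symm hne0)
    have hbot := T2.neg_mul_atTop n2 (tendsto_rpow_atTop hpos)
    obtain ⟨u, hu1, hu2, hu3⟩ := ((hlsc (g 0 0 - 1) (by linarith)).and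
      ((hbot.eventually_lt_atBot (g 0 0 - 1)).and (eventually_gt_atTop 0))).exists
    rw [div_mul_cancel₀ _ (Real.rpow_pos_of_pos hu3 _).ne'] at hu2
    linarith
  subst hρ20
  simp only [Real.rpow_zero, div_one] at T2
  have hg00 : g 0 0 < 0 := by
    by_contra! hcon
    obtain ⟨u, hu1, hu2⟩ := ((hlsc (gs₂ y 0 / 2) (by linarith)).and
      (T2.eventually_lt_const (show gs₂ y 0 < gs₂ y 0 / 2 by linarith))).exists
    linarith
  obtain ⟨w, hw, hwpos⟩ := h₂A4 y ⟨hy2, hy0⟩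
  have hzero : ∀ w' ∈ Ξ, Tendsto (fun u : ℝ => g 0 (u • w')) atTop (𝓝 (gs₂ 0 w')) := by
    intro w' hw'
    have := h₂A1.2 0 h0mem w' hw' (fun _ => 0) (fun u => u • w') (fun _ _ => h0)
      (fun u hu => hZc u hu w' hw') (by simp) (tendsto_ray w')
    simpa using this
  have hhom : ∀ s : ℝ, 0 < s → gs₂ 0 (s • w) = gs₂ 0 w := by
    intro s hs
    have t1 := hzero (s • w) (hZc s hs w hw)
    have t2 := (hzero w hw).comp (tendsto_id.atTop_mul_const hs)
    refine tendsto_nhds_unique t1 (t2.congr fun u => ?_)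
    simp [smul_smul]
  have h00 : gs₂ 0 0 = g 0 0 := by
    have := hzero 0 hz0
    simp only [smul_zero] at this
    exact tendsto_nhds_unique this tendsto_const_nhds
  have hgs0w : gs₂ 0 w = g 0 0 := by
    have hc := h₂A1.1 (0, 0) ⟨h0mem, hz0⟩
    have hpath : Tendsto (fun u : ℝ => ((0 : Rn n), u⁻¹ • w)) atTop
        (𝓝[asymCone X γ₂ ×ˢ Ξ] (0, 0)) := by
      refine tendsto_nhdsWithin_iff.2 ⟨?_, ?_⟩
      · refine tendsto_const_nhds.prodMk_nhds ?_
        simpa using (tendsto_inv_atTop_zero (𝕜 := ℝ)).smul_const w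
      · filter_upwards [eventually_gt_atTop 0] with u hu
        exact ⟨h0mem, hZc _ (inv_pos.2 hu) w hw⟩
    have t1 := Tendsto.comp hc hpath
    have t2 : Tendsto (fun _ : ℝ => gs₂ 0 w) atTop (𝓝 (gs₂ 0 0)) := by
      refine t1.congr' ?_
      filter_upwards [eventually_gt_atTop 0] with u hu
      exact hhom _ (inv_pos.2 hu)
    rw [← h00]
    exact tendsto_nhds_unique tendsto_const_nhds t2
  -- at most linear decrease at infinity
  have hle : ρ₁ ≤ γ₁ := by
    by_contra! hcon
    have T1 := h₁A1.2 y hy 0 hz0 (fun u => u ^ γ₁ • y) (fun _ => 0)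
      (fun u hu => hcX _ u hu) (fun _ _ => hz0) (hcurve γ₁) hzz
    have hbot := T1.neg_mul_atTop n1 (tendsto_rpow_atTop (sub_pos.2 hcon))
    obtain ⟨u, hu1, hu2⟩ := ((hbot.eventually_lt_atBot (g y 0)).and
      (eventually_gt_atTop 1)).exists
    have hu0 : 0 < u := by linarith
    have hs1 : 1 ≤ u ^ γ₁ := Real.one_le_rpow hu2.le hγ₁.le
    have hs0 : 0 < u ^ γ₁ := by linarith
    have hr0 : 0 < u ^ ρ₁ := Real.rpow_pos_of_pos hu0 _
    have hinv : (u ^ γ₁)⁻¹ ≤ 1 := inv_le_one_of_one_le₀ hs1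
    have hc := (hgcv 0 hz0).2 h0 (hcX γ₁ u hu0) (sub_nonneg.2 hinv)
      (inv_pos.2 hs0).le (by ring)
    have e1 : (1 - (u ^ γ₁)⁻¹) • (0 : Rn n) + (u ^ γ₁)⁻¹ • (u ^ γ₁ • y) = y := by
      simp [smul_smul, hs0.ne']
    rw [e1] at hc
    simp only [smul_eq_mul] at hc
    have e2 : g (u ^ γ₁ • y) 0 / u ^ ρ₁ * u ^ (ρ₁ - γ₁) = (u ^ γ₁)⁻¹ * g (u ^ γ₁ • y) 0 := by
      rw [Real.rpow_sub hu0]; field_simp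
    rw [e2] at hu1
    have := mul_nonneg (sub_nonneg.2 hinv) (neg_nonneg.2 hg00.le)
    linarith
  have T3 := h₂A1.2 y hy2 w hw (fun u => u ^ γ₂ • y) (fun u => u • w)
    (fun u hu => hcX _ u hu) (fun u hu => hZc u hu w hw) (hcurve γ₂) (tendsto_ray w)
  simp only [Real.rpow_zero, div_one] at T3
  have T4 := h₁A1.2 y hy w hw (fun u => u ^ γ₁ • y) (fun u => u • w)
    (fun u hu => hcX _ u hu) (fun u hu => hZc u hu w hw) (hcurve γ₁) (tendsto_ray w)
  have T5 := hzero w hw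
  rw [hgs0w] at T5
  have hexp : 0 < γ₁ - γ₂ - ρ₁ := by linarith
  have htop : Tendsto (fun u : ℝ => gs₂ y w / 2 * u ^ (γ₁ - γ₂ - ρ₁)) atTop atTop :=
    (tendsto_rpow_atTop hexp).const_mul_atTop (by linarith)
  refine not_tendsto_nhds_of_tendsto_atTop (tendsto_atTop_mono' _ ?_ htop) _ T4
  filter_upwards [eventually_gt_atTop 1, T5.eventually_lt_const hg00,
    T3.eventually_const_lt (show gs₂ y w / 2 < gs₂ y w by linarith)] with u hu1 hneg hbig
  have hu0 : 0 < u := by linarith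
  have hr0 : 0 < u ^ ρ₁ := Real.rpow_pos_of_pos hu0 _
  have ht0 : 0 < u ^ (γ₂ - γ₁) := Real.rpow_pos_of_pos hu0 _
  have ht1 : u ^ (γ₂ - γ₁) ≤ 1 := Real.rpow_le_one_of_one_le_of_nonpos hu1.le (by linarith)
  have hc := (hgcv _ (hZc u hu0 w hw)).2 h0 (hcX γ₁ u hu0) (sub_nonneg.2 ht1) ht0.le (by ring)
  have e1 : (1 - u ^ (γ₂ - γ₁)) • (0 : Rn n) + u ^ (γ₂ - γ₁) • (u ^ γ₁ • y) = u ^ γ₂ • y := by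
    rw [smul_zero, zero_add, smul_smul, ← Real.rpow_add hu0]; simp
  rw [e1] at hc
  simp only [smul_eq_mul] at hc
  have h6 := mul_nonneg (sub_nonneg.2 ht1) (neg_nonneg.2 hneg.le)
  have h7 : gs₂ y w / 2 ≤ u ^ (γ₂ - γ₁) * g (u ^ γ₁ • y) (u • w) := by linarith
  have e3 : u ^ (γ₁ - γ₂ - ρ₁) = (u ^ (γ₂ - γ₁))⁻¹ / u ^ ρ₁ := by
    rw [Real.rpow_sub hu0, ← Real.rpow_neg hu0.le]; congr 2; ring
  rw [e3, ← mul_div_assoc]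
  refine div_le_div_of_nonneg_right ?_ hr0.le
  rw [← div_eq_mul_inv, div_le_iff₀ ht0]
  linarith

/-- Uniqueness of the scaling exponents: if two triples `(γ₁, ρ₁, gs₁)` and
`(γ₂, ρ₂, gs₂)` both satisfy conditions (A1)–(A4) for the same `g`, then
`γ₁ = γ₂` and `ρ₁ = ρ₂`. -/
theorem scaling_exponents_unique {n m : ℕ} (X : Set (Rn n)) (Ξ : Set (Rn m))
    (g : Rn n → Rn m → ℝ) (hreg : GRegular X Ξ g)
    (γ₁ ρ₁ γ₂ ρ₂ : ℝ) (gs₁ gs₂ : Rn n → Rn m → ℝ)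
    (hγ₁ : γ₁ ≠ 0) (hγ₂ : γ₂ ≠ 0) (hρ₁ : 0 ≤ ρ₁) (hρ₂ : 0 ≤ ρ₂)
    (h₁A1 : CondA1 X Ξ g γ₁ ρ₁ gs₁) (h₁A2 : CondA2 X γ₁)
    (h₁A3 : CondA3 X γ₁ gs₁) (h₁A4 : CondA4 X Ξ γ₁ gs₁)
    (h₂A1 : CondA1 X Ξ g γ₂ ρ₂ gs₂) (h₂A2 : CondA2 X γ₂)
    (h₂A3 : CondA3 X γ₂ gs₂) (h₂A4 : CondA4 X Ξ γ₂ gs₂) :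
    γ₁ = γ₂ ∧ ρ₁ = ρ₂ := by
  rcases hγ₁.lt_or_gt with a | a <;> rcases hγ₂.lt_or_gt with b | b
  case inl.inr => exact (opp_sign_false hreg b a hρ₁ h₂A1 h₂A2 h₂A3 h₁A1 h₁A2 h₁A3 h₁A4).elim
  case inr.inl => exact (opp_sign_false hreg a b hρ₂ h₁A1 h₁A2 h₁A3 h₂A1 h₂A2 h₂A3 h₂A4).elim
  all_goals
    have hs : 0 < γ₁ / γ₂ := by
      first
      | exact div_pos_of_neg_of_neg a b
      | exact div_pos a b
    have hs' : 0 < γ₂ / γ₁ := by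
      rw [← inv_div]; exact inv_pos.2 hs
    have r := same_sign_ratio hreg hs h₁A1 h₁A2 h₁A3 h₂A1 h₂A3
    have g1 := same_sign_ge hreg hs h₁A1 h₁A2 h₁A3 h₂A1 h₂A3 h₂A4
    have g2 := same_sign_ge hreg hs' h₂A1 h₂A2 h₂A3 h₁A1 h₁A3 h₁A4
    have hone : γ₁ / γ₂ = 1 := by
      rw [← inv_div] at g2
      exact le_antisymm ((one_le_inv₀ hs).1 g2) g1
    rw [hone, one_mul] at r
    exact ⟨(div_eq_one_iff_eq hγ₂).1 hone, r.symm⟩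
end
end

section
/- Let X ⊆ ℝ^n be a nonempty closed convex set and Ξ ⊆ ℝ^m a nonempty closed cone, and fix γ ≠ 0. Suppose h : X × Ξ → (0,∞) satisfies condition (A1) with exponents (γ, ρ_h) for some ρ_h ≥ 0 and a continuous limit function h* : X^∞_γ × Ξ → ℝ satisfying h*(y, w) > 0 for all (y, w) ∈ X^∞_γ × Ξ. Suppose f : X × Ξ → ℝ satisfies conditions (A1)–(A5) of Assumption 2 with exponents (γ, ρ) for some ρ ≥ 0 and limit function f*. Then the product g(x, z) := h(x, z) f(x, z) satisfies conditions (A1)–(A5) with exponents (γ, ρ + ρ_h) and limit function g*(y, w) := h*(y, w) f*(y, w); in particular g* is continuous on X^∞_γ × Ξ, g(x_u, z_u)/u^{ρ+ρ_h} → g*(y, w) along all admissible families, g*(y, 0) < 0 for all y ∈ X^∞_γ \ {0}, for every y ∈ X^∞_γ \ {0} there exists w ∈ Ξ with g*(y, w) > 0, and if γ < 0 then g(0, z) ≤ 0 for all z ∈ Ξ. -/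
open Filter Topology MeasureTheory Set

noncomputable section

/-- Invariance to multiplication by a strictly positive function: if `h` satisfies
(A1) with exponents `(γ, ρh)` and strictly positive limit `hs`, and `f` satisfies
(A1)–(A5) with exponents `(γ, ρ)` and limit `fs`, then `g = h·f` satisfies
(A1)–(A5) with exponents `(γ, ρ + ρh)` and limit `hs·fs`. -/
theorem product_invariance {n m : ℕ} (X : Set (Rn n)) (Ξ : Set (Rn m))
    (hXne : X.Nonempty) (hXcl : IsClosed X) (hXcv : Convex ℝ X)
    (hΞne : Ξ.Nonempty) (hΞcl : IsClosed Ξ) (hΞcone : IsPosCone Ξ)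
    (γ : ℝ) (hγ : γ ≠ 0)
    (h f : Rn n → Rn m → ℝ) (ρh ρ : ℝ) (hρh : 0 ≤ ρh) (hρ : 0 ≤ ρ)
    (hs fs : Rn n → Rn m → ℝ)
    (hpos : ∀ x ∈ X, ∀ z ∈ Ξ, 0 < h x z)
    (hhA1 : CondA1 X Ξ h γ ρh hs)
    (hspos : ∀ y ∈ asymCone X γ, ∀ w ∈ Ξ, 0 < hs y w)
    (hfA1 : CondA1 X Ξ f γ ρ fs) (hfA2 : CondA2 X γ) (hfA3 : CondA3 X γ fs)
    (hfA4 : CondA4 X Ξ γ fs) (hfA5 : CondA5 Ξ f γ) :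
    CondA1 X Ξ (fun x z => h x z * f x z) γ (ρ + ρh)
        (fun y w => hs y w * fs y w) ∧
      CondA2 X γ ∧
      CondA3 X γ (fun y w => hs y w * fs y w) ∧
      CondA4 X Ξ γ (fun y w => hs y w * fs y w) ∧
      CondA5 Ξ (fun x z => h x z * f x z) γ := by
  have hΞ0 : (0 : Rn m) ∈ Ξ := by
    obtain ⟨z, hz⟩ := hΞne
    have ht : Tendsto (fun c : ℝ => c • z) (𝓝[>] 0) (𝓝 0) := by
      have : Tendsto (fun c : ℝ => c • z) (𝓝 0) (𝓝 ((0 : ℝ) • z)) :=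
        (continuous_id.smul continuous_const).tendsto 0
      rw [zero_smul] at this
      exact this.mono_left nhdsWithin_le_nhds
    refine hΞcl.mem_of_tendsto ht ?_
    filter_upwards [self_mem_nhdsWithin] with c hc
    exact hΞcone c hc z hz
  refine ⟨⟨hhA1.1.mul hfA1.1, ?_⟩, hfA2, ?_, ?_, ?_⟩
  · intro y hy w hw xu zu hx hz hxt hzt
    have h1 := hhA1.2 y hy w hw xu zu hx hz hxt hzt
    have h2 := hfA1.2 y hy w hw xu zu hx hz hxt hzt
    refine (h1.mul h2).congr' ?_
    filter_upwards [eventually_gt_atTop 0] with u hu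
    rw [Real.rpow_add hu, div_mul_div_comm, mul_comm (u ^ ρ)]
  · intro y hy
    exact mul_neg_of_pos_of_neg (hspos y hy.1 0 hΞ0) (hfA3 y hy)
  · intro y hy
    obtain ⟨w, hw, hp⟩ := hfA4 y hy
    exact ⟨w, hw, mul_pos (hspos y hy.1 w hw) hp⟩
  · intro hneg z hz
    have hX0 : (0 : Rn n) ∈ X := by
      obtain ⟨y, ⟨a, l, ha, hl, hlt, hat⟩, -⟩ := hfA2
      have hp : Tendsto (fun k => l k ^ γ) atTop (𝓝 0) := by
        have := (tendsto_rpow_neg_atTop (neg_pos.mpr hneg)).comp hlt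
        simpa [Function.comp_def] using this
      have ht := hp.smul hat
      rw [zero_smul] at ht
      refine hXcl.mem_of_tendsto ht (Eventually.of_forall fun k => ?_)
      have hne : l k ^ γ ≠ 0 := (Real.rpow_pos_of_pos (hl k) γ).ne'
      simpa [smul_smul, hne] using ha k
    exact mul_nonpos_of_nonneg_of_nonpos (hpos 0 hX0 z hz).le (hfA5 hneg z hz)
end
end

section
/- Let X ⊆ ℝ^n be a nonempty closed convex set and Ξ ⊆ ℝ^m a nonempty closed cone, fix γ ≠ 0 and ρ ≥ 0, and let K ≥ 1 be an integer. Suppose each function g_i : X × Ξ → ℝ, i = 1, …, K, satisfies conditions (A1)–(A5) of Assumption 2 with the same exponents (γ, ρ) and respective continuous limit functions g_i* : X^∞_γ × Ξ → ℝ. Then g(x, z) := max_{i=1,…,K} g_i(x, z) satisfies conditions (A1)–(A5) with exponents (γ, ρ) and limit function g*(y, w) := max_{i=1,…,K} g_i*(y, w). -/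
open Filter Topology MeasureTheory Set

noncomputable section

/-- Finite suprema commute with limits. -/
theorem tendsto_iSup_fin_aux {K : ℕ} (hK : 1 ≤ K) {α : Type*} {l : Filter α}
    (f : Fin K → α → ℝ) (a : Fin K → ℝ) (h : ∀ i, Tendsto (f i) l (𝓝 (a i))) :
    Tendsto (fun x => ⨆ i, f i x) l (𝓝 (⨆ i, a i)) := by
  haveI : Nonempty (Fin K) := ⟨⟨0, hK⟩⟩
  have := Filter.Tendsto.finset_sup'_nhds_apply (s := Finset.univ)
    Finset.univ_nonempty (fun i _ => h i)
  simpa only [Finset.sup'_univ_eq_ciSup] using this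

/-- Joint chance constraints: if each `g i` satisfies (A1)–(A5) with the same
exponents `(γ, ρ)` and limit `gs i`, then the pointwise maximum
`(x, z) ↦ max_i g i x z` satisfies (A1)–(A5) with exponents `(γ, ρ)` and limit
`(y, w) ↦ max_i gs i y w`. -/
theorem max_satisfies_assumption {n m K : ℕ} (hK : 1 ≤ K)
    (X : Set (Rn n)) (Ξ : Set (Rn m))
    (hXne : X.Nonempty) (hXcl : IsClosed X) (hXcv : Convex ℝ X)
    (hΞne : Ξ.Nonempty) (hΞcl : IsClosed Ξ) (hΞcone : IsPosCone Ξ)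
    (γ ρ : ℝ) (hγ : γ ≠ 0) (hρ : 0 ≤ ρ)
    (g : Fin K → Rn n → Rn m → ℝ) (gs : Fin K → Rn n → Rn m → ℝ)
    (hA1 : ∀ i, CondA1 X Ξ (g i) γ ρ (gs i)) (hA2 : CondA2 X γ)
    (hA3 : ∀ i, CondA3 X γ (gs i)) (hA4 : ∀ i, CondA4 X Ξ γ (gs i))
    (hA5 : ∀ i, CondA5 Ξ (g i) γ) :
    CondA1 X Ξ (fun x z => ⨆ i, g i x z) γ ρ (fun y w => ⨆ i, gs i y w) ∧
      CondA2 X γ ∧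
      CondA3 X γ (fun y w => ⨆ i, gs i y w) ∧
      CondA4 X Ξ γ (fun y w => ⨆ i, gs i y w) ∧
      CondA5 Ξ (fun x z => ⨆ i, g i x z) γ := by
  haveI : Nonempty (Fin K) := ⟨⟨0, hK⟩⟩
  refine ⟨⟨?_, ?_⟩, hA2, ?_, ?_, ?_⟩
  · intro p hp
    exact tendsto_iSup_fin_aux hK (fun i (q : Rn n × Rn m) => gs i q.1 q.2) _
      (fun i => (hA1 i).1 p hp)
  · intro y hy w hw xu zu hx hz hxy hzw
    have h := tendsto_iSup_fin_aux hK (fun i (u : ℝ) => g i (xu u) (zu u) / u ^ ρ) _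
      (fun i => (hA1 i).2 y hy w hw xu zu hx hz hxy hzw)
    refine h.congr' ?_
    filter_upwards [eventually_gt_atTop (0 : ℝ)] with u hu
    simp only [div_eq_mul_inv]
    exact (Real.iSup_mul_of_nonneg (inv_nonneg.2 (Real.rpow_nonneg hu.le ρ)) _).symm
  · intro y hy
    obtain ⟨i, hi⟩ := exists_eq_ciSup_of_finite (f := fun i => gs i y 0)
    change (⨆ i, gs i y 0) < 0
    rw [← hi]
    exact hA3 i y hy
  · intro y hy
    obtain ⟨w, hw, h⟩ := hA4 ⟨0, hK⟩ y hy
    exact ⟨w, hw, h.trans_le (le_ciSup (f := fun i => gs i y w) (Set.finite_range _).bddAbove ⟨0, hK⟩)⟩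
  · intro hg z hz
    exact ciSup_le (fun i => hA5 i hg z hz)
end
end

section
/- Let (f_u)_{u>0} be a family of real-valued functions on ℝ^m converging continuously to f* : ℝ^m → ℝ. Then for every M > 0, every δ > 0, and every a ∈ ℝ, there exists u₀ > 0 such that for all u > u₀: {x ∈ ℝ^m : ‖x‖ ≤ M and f_u(x) > a} ⊆ {x ∈ ℝ^m : f*(x) ≥ a} + {x ∈ ℝ^m : ‖x‖ ≤ δ}, where + denotes the Minkowski sum and ‖·‖ is the Euclidean norm. -/
open Filter Topology MeasureTheory Set Pointwise

noncomputable section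

/-- The family `(f_u)_{u>0}` converges continuously to `fstar`: for every `x`
and every family `x_u → x` (as `u → ∞`), `f_u(x_u) → fstar(x)`. -/
def ContConv {d : ℕ} (f : ℝ → Rn d → ℝ) (fstar : Rn d → ℝ) : Prop :=
  ∀ x : Rn d, ∀ xu : ℝ → Rn d, Tendsto xu atTop (𝓝 x) →
    Tendsto (fun u : ℝ => f u (xu u)) atTop (𝓝 (fstar x))

/-- Lemma 2(i): superlevel sets of continuously convergent functions, restricted to a
ball, are eventually contained in a `δ`-enlargement of the limit's superlevel set. -/
theorem levelset_containment_i {d : ℕ} (f : ℝ → Rn d → ℝ) (fstar : Rn d → ℝ)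
    (hcc : ContConv f fstar) (M δ : ℝ) (hM : 0 < M) (hδ : 0 < δ) (a : ℝ) :
    ∃ u₀ : ℝ, 0 < u₀ ∧ ∀ u : ℝ, u₀ < u →
      {x : Rn d | ‖x‖ ≤ M ∧ a < f u x} ⊆
        {x : Rn d | a ≤ fstar x} + {x : Rn d | ‖x‖ ≤ δ} := by
  classical
  by_contra hcon
  push Not at hcon
  -- the set of bad parameters, with a choice of bad points
  have hbad : ∀ N : ℝ, ∃ u, N < u ∧ ∃ x : Rn d, ‖x‖ ≤ M ∧ a < f u x ∧
      x ∉ {x : Rn d | a ≤ fstar x} + {x : Rn d | ‖x‖ ≤ δ} := by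
    intro N
    obtain ⟨u, hu, hn⟩ := hcon (max N 1) (lt_of_lt_of_le one_pos (le_max_right _ _))
    obtain ⟨x, hx, hx'⟩ := Set.not_subset.1 hn
    exact ⟨u, lt_of_le_of_lt (le_max_left _ _) hu, x, hx.1, hx.2, hx'⟩
  let P : ℝ → Rn d → Prop := fun u x => ‖x‖ ≤ M ∧ a < f u x ∧
      x ∉ {x : Rn d | a ≤ fstar x} + {x : Rn d | ‖x‖ ≤ δ}
  choose! g hg using (fun u (h : ∃ x, P u x) => h)
  choose v hv hPv using hbad
  obtain ⟨x, -, φ, hφ, hlim⟩ := (isCompact_closedBall (0 : Rn d) M).tendsto_subseq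
    (x := fun n : ℕ => g (v n))
    (fun n => by simpa using (hg (v n) (hPv n)).1)
  let w : ℕ → ℝ := fun n => v (φ n)
  have hlim' : Tendsto (fun n => g (w n)) atTop (𝓝 x) := hlim
  have hw : Tendsto w atTop atTop := by
    refine tendsto_atTop_mono (fun n => (hv (φ n : ℕ)).le) ?_
    exact tendsto_natCast_atTop_atTop.comp hφ.tendsto_atTop
  let y : ℝ → Rn d := fun u => if u ∈ Set.range w then g u else x
  have hy : Tendsto y atTop (𝓝 x) := by
    intro V hV
    obtain ⟨N, hN⟩ := eventually_atTop.1 (hlim' hV)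
    have hfin : ∀ᶠ u : ℝ in atTop, ∀ n ∈ Finset.range N, w n < u :=
      (Filter.eventually_all_finset _).2 fun n _ => eventually_gt_atTop (w n)
    rw [Filter.mem_map]
    filter_upwards [hfin] with u hu
    by_cases h : u ∈ Set.range w
    · obtain ⟨n, rfl⟩ := h
      have hn : N ≤ n := by
        by_contra hlt
        exact lt_irrefl _ (hu n (Finset.mem_range.2 (not_le.1 hlt)))
      have : y (w n) = g (w n) := if_pos ⟨n, rfl⟩
      change y (w n) ∈ V
      rw [this]
      exact hN n hn
    · have : y u = x := if_neg h
      change y u ∈ V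
      rw [this]
      exact mem_of_mem_nhds hV
  have hf := (hcc x y hy).comp hw
  have hax : a ≤ fstar x := by
    refine ge_of_tendsto' hf fun n => ?_
    have : y (w n) = g (w n) := if_pos ⟨n, rfl⟩
    change a ≤ f (w n) (y (w n))
    rw [this]
    exact (hg (w n) (hPv _)).2.1.le
  obtain ⟨n, hn⟩ := (hlim'.eventually (Metric.closedBall_mem_nhds x hδ)).exists
  refine (hg (w n) (hPv _)).2.2 (Set.mem_add.2 ⟨x, hax, g (w n) - x, ?_, by abel⟩)
  simpa [dist_eq_norm] using hn
end
end

section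
/- Suppose Assumption 1 holds for a Borel probability measure P on ℝ^m with support the nonempty closed cone Ξ, negative log-density Q ∈ MRV(Ξ, q, λ), q ∈ RV(α), α > 0, and λ(θ) > 0 for all unit θ ∈ Ξ. Then for every closed set C ⊆ ℝ^m, limsup_{u→∞} log P({z ∈ ℝ^m : z/u ∈ C}) / q(u) ≤ − inf{λ(w) : w ∈ C ∩ Ξ}, with the conventions log 0 = −∞ and inf ∅ = +∞. -/
open Filter Topology MeasureTheory Set

noncomputable section

lemma joint_tendsto {d : ℕ} {Ξ : Set (Rn d)} {Q : Rn d → ℝ} {q : ℝ → ℝ} {lam : Rn d → ℝ}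
    (h : MultiRegVary Ξ Q q lam) {w : Rn d} (hw : w ∈ Ξ) :
    Tendsto (fun p : ℝ × Rn d => Q (p.1 • p.2) / q p.1) (atTop ×ˢ 𝓝[Ξ] w) (𝓝 (lam w)) := by
  apply tendsto_of_seq_tendsto
  intro x hx
  apply tendsto_of_subseq_tendsto
  intro ns hns
  have hx' := hx.comp hns
  rw [tendsto_prod_iff'] at hx'
  obtain ⟨h1, h2⟩ := hx'
  obtain ⟨h2, h3⟩ := tendsto_nhdsWithin_iff.1 h2
  obtain ⟨N, hN⟩ := eventually_atTop.1 h3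
  have h1' := (tendsto_add_atTop_iff_nat N).2 h1
  have h2' := (tendsto_add_atTop_iff_nat N).2 h2
  obtain ⟨φ, hφ, hmono⟩ := strictMono_subseq_of_tendsto_atTop h1'
  refine ⟨fun n => φ n + N, ?_⟩
  set a : ℕ → ℝ := fun n => (x (ns (φ n + N))).1 with ha
  set b : ℕ → Rn d := fun n => (x (ns (φ n + N))).2 with hb
  have hamono : StrictMono a := hmono
  have hat : Tendsto a atTop atTop := h1'.comp hφ.tendsto_atTop
  have hbt : Tendsto b atTop (𝓝 w) := h2'.comp hφ.tendsto_atTop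
  have hbm : ∀ n, b n ∈ Ξ := fun n => hN (φ n + N) (by omega)
  have key := h.2.2.2 w hw (Function.extend a b (fun _ => w)) ?_ ?_
  · have := key.comp hat
    refine this.congr ?_
    intro n
    simp only [Function.comp]
    rw [hamono.injective.extend_apply]
  · intro u _
    by_cases hu : ∃ n, a n = u
    · obtain ⟨n, rfl⟩ := hu
      rw [hamono.injective.extend_apply]; exact hbm n
    · rw [Function.extend_apply' _ _ _ hu]; exact hw
  · rw [tendsto_def]
    intro V hV
    obtain ⟨M, hM⟩ := eventually_atTop.1 (hbt hV)
    filter_upwards [eventually_ge_atTop (a M)] with u hu'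
    simp only [mem_preimage]
    by_cases hu : ∃ n, a n = u
    · obtain ⟨n, rfl⟩ := hu
      rw [hamono.injective.extend_apply]
      exact hM n (hamono.le_iff_le.1 hu')
    · rw [Function.extend_apply' _ _ _ hu]; exact mem_of_mem_nhds hV

/-- compactness upgrade -/
lemma compact_unif {d : ℕ} {Ξ : Set (Rn d)} {Q : Rn d → ℝ} {q : ℝ → ℝ} {lam : Rn d → ℝ}
    (h : MultiRegVary Ξ Q q lam) {K : Set (Rn d)} (hK : IsCompact K) (hKΞ : K ⊆ Ξ) {M : ℝ}
    (hM : ∀ w ∈ K, M < lam w) :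
    ∀ᶠ u : ℝ in atTop, ∀ w ∈ K, M < Q (u • w) / q u := by
  refine hK.induction_on (p := fun S => ∀ᶠ u : ℝ in atTop, ∀ w ∈ S, M < Q (u • w) / q u) ?_ ?_ ?_ ?_
  · simp
  · intro s t hst ht
    filter_upwards [ht] with u hu w hw using hu w (hst hw)
  · intro s t hs ht
    filter_upwards [hs, ht] with u h1 h2 w hw
    exact hw.elim (h1 w) (h2 w)
  · intro w hw
    have := (joint_tendsto h (hKΞ hw)).eventually (lt_mem_nhds (hM w hw))
    obtain ⟨pa, ha, pb, hb, hab⟩ := eventually_prod_iff.1 this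
    refine ⟨{x | pb x}, nhdsWithin_mono _ hKΞ hb, ?_⟩
    filter_upwards [ha] with u hu x hx using hab hu hx

lemma q_unif {d : ℕ} {Ξ : Set (Rn d)} {Q : Rn d → ℝ} {q : ℝ → ℝ} {lam : Rn d → ℝ} {α : ℝ}
    (hα : 0 < α) (hq : RegVary q α) (hcone : IsPosCone Ξ)
    (h : MultiRegVary Ξ Q q lam) {θ : Rn d} (hθ : θ ∈ Ξ) (hl : 0 < lam θ) :
    ∀ᶠ u : ℝ in atTop, ∀ s ∈ Icc (1:ℝ) 2, 1 / 2 < q (u * s) / q u := by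
  refine isCompact_Icc.induction_on
    (p := fun S => ∀ᶠ u : ℝ in atTop, ∀ s ∈ S, 1 / 2 < q (u * s) / q u) ?_ ?_ ?_ ?_
  · simp
  · intro s t hst ht
    filter_upwards [ht] with u hu w hw using hu w (hst hw)
  · intro s t hs ht
    filter_upwards [hs, ht] with u h1 h2 w hw
    exact hw.elim (h1 w) (h2 w)
  · intro s hs
    have hs0 : 0 < s := by linarith [hs.1]
    have hsT : Tendsto (fun p : ℝ × ℝ => p.2) (atTop ×ˢ 𝓝[Icc 1 2] s) (𝓝 s) :=
      tendsto_snd.mono_right nhdsWithin_le_nhds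
    have hmem : ∀ᶠ p : ℝ × ℝ in atTop ×ˢ 𝓝[Icc 1 2] s, p.2 ∈ Icc (1:ℝ) 2 :=
      tendsto_snd.eventually self_mem_nhdsWithin
    have hT1 : Tendsto (fun p : ℝ × ℝ => (p.1, p.2 • θ)) (atTop ×ˢ 𝓝[Icc 1 2] s)
        (atTop ×ˢ 𝓝[Ξ] (s • θ)) := by
      refine tendsto_fst.prodMk (tendsto_nhdsWithin_iff.2 ⟨hsT.smul_const θ, ?_⟩)
      filter_upwards [hmem] with p hp
      exact hcone _ (by linarith [hp.1]) _ hθ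
    have hT2 : Tendsto (fun p : ℝ × ℝ => (p.1 * p.2, θ)) (atTop ×ˢ 𝓝[Icc 1 2] s)
        (atTop ×ˢ 𝓝[Ξ] θ) := by
      refine Tendsto.prodMk (tendsto_fst.atTop_mul_pos hs0 hsT) ?_
      exact tendsto_const_nhdsWithin hθ
    have e1 := (joint_tendsto h (hcone s hs0 _ hθ)).comp hT1
    have e2 := (joint_tendsto h hθ).comp hT2
    have e3 := e1.div e2 hl.ne'
    have e4 : Tendsto (fun p : ℝ × ℝ => q (p.1 * p.2) / q p.1) (atTop ×ˢ 𝓝[Icc 1 2] s)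
        (𝓝 (lam (s • θ) / lam θ)) := by
      refine e3.congr' ?_
      filter_upwards [hmem, tendsto_fst.eventually (eventually_gt_atTop (0:ℝ)),
        e2.eventually (lt_mem_nhds hl)] with p hp hp1 hp2
      simp only [Function.comp, Pi.div_apply] at hp2 ⊢
      have a1 := hq.1 p.1 hp1
      have a2 := hq.1 (p.1 * p.2) (mul_pos hp1 (by linarith [hp.1]))
      have a3 : 0 < Q ((p.1 * p.2) • θ) := by
        by_contra hc
        have := div_nonpos_of_nonpos_of_nonneg (not_lt.1 hc) a2.le
        linarith
      rw [smul_smul]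
      field_simp
    have e5 : lam (s • θ) / lam θ = s ^ α := by
      refine tendsto_nhds_unique ?_ (hq.2 s hs0)
      exact e4.comp (tendsto_id.prodMk (tendsto_const_nhdsWithin hs))
    have e6 : 1 / 2 < lam (s • θ) / lam θ := by
      rw [e5]
      have := Real.one_le_rpow hs.1 hα.le
      linarith
    obtain ⟨pa, ha, pb, hb, hab⟩ := eventually_prod_iff.1 (e4.eventually (lt_mem_nhds e6))
    refine ⟨{x | pb x}, hb, ?_⟩
    filter_upwards [ha] with u hu x hx using hab hu hx

lemma potter {q : ℝ → ℝ} {α : ℝ} (hα : 0 < α) (hq : RegVary q α)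
    (hu : ∀ᶠ u : ℝ in atTop, ∀ s ∈ Icc (1:ℝ) 2, 1 / 2 < q (u * s) / q u) :
    ∃ c > 0, ∃ U > 0, ∀ u ≥ U, ∀ r ≥ 1, c * r ^ (α / 2) * q u ≤ q (u * r) := by
  have h2 : (2:ℝ) ^ (α / 2) < 2 ^ α := Real.rpow_lt_rpow_of_exponent_lt (by norm_num) (by linarith)
  obtain ⟨U, hU⟩ := eventually_atTop.1
    (hu.and ((hq.2 2 (by norm_num)).eventually (lt_mem_nhds h2)))
  have h20 : (0:ℝ) < 2 ^ (α / 2) := by positivity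
  refine ⟨1 / (2 * 2 ^ (α / 2)), by positivity, max U 1, by positivity, ?_⟩
  intro u hu1
  have huU : U ≤ u := le_trans (le_max_left _ _) hu1
  have hu0 : 0 < u := lt_of_lt_of_le one_pos (le_trans (le_max_right _ _) hu1)
  have key : ∀ n : ℕ, ∀ r : ℝ, 1 ≤ r → r ≤ 2 ^ (n + 1) →
      1 / (2 * 2 ^ (α / 2)) * r ^ (α / 2) * q u ≤ q (u * r) := by
    intro n
    induction n with
    | zero =>
      intro r h1 hr
      have := (hU u huU).1 r ⟨h1, by simpa using hr⟩
      have hqu := hq.1 u hu0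
      rw [lt_div_iff₀ hqu] at this
      refine le_trans ?_ this.le
      gcongr
      have : r ^ (α / 2) ≤ 2 ^ (α / 2) :=
        Real.rpow_le_rpow (by linarith) (by simpa using hr) (by linarith)
      rw [div_mul_eq_mul_div, div_le_div_iff₀ (by positivity) (by norm_num)]
      linarith
    | succ n ih =>
      intro r h1 hr
      by_cases hr2 : r ≤ 2 ^ (n + 1)
      · exact ih r h1 hr2
      have hr3 : 2 ≤ r := by
        have : (2:ℝ) ^ 1 ≤ 2 ^ (n + 1) := pow_le_pow_right₀ (by norm_num) (by omega)
        linarith [not_le.1 hr2]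
      have i1 := ih (r / 2) (by linarith) (by rw [pow_succ] at hr; linarith)
      have hur : U ≤ u * (r / 2) := by nlinarith
      have i2 := (hU _ hur).2
      have hpos := hq.1 (u * (r / 2)) (by positivity)
      rw [lt_div_iff₀ hpos] at i2
      have e : u * (r / 2) * 2 = u * r := by ring
      rw [e] at i2
      have e2 : r ^ (α / 2) = 2 ^ (α / 2) * (r / 2) ^ (α / 2) := by
        rw [← Real.mul_rpow (by norm_num) (by linarith)]; congr 1; ring
      rw [e2]
      calc _ = 2 ^ (α / 2) * (1 / (2 * 2 ^ (α / 2)) * (r / 2) ^ (α / 2) * q u) := by ring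
        _ ≤ 2 ^ (α / 2) * q (u * (r / 2)) := by gcongr
        _ ≤ _ := i2.le
  intro r hr
  obtain ⟨n, hn⟩ := pow_unbounded_of_one_lt r (by norm_num : (1:ℝ) < 2)
  exact key n r hr (hn.le.trans (pow_le_pow_right₀ (by norm_num) (by omega)))

lemma tail_lower {d : ℕ} {Ξ : Set (Rn d)} {Q : Rn d → ℝ} {q : ℝ → ℝ} {lam : Rn d → ℝ} {α : ℝ}
    (hq : RegVary q α) (hcl : IsClosed Ξ) (hcone : IsPosCone Ξ)
    (h : MultiRegVary Ξ Q q lam) (hl : ∀ z ∈ Ξ, ‖z‖ = 1 → 0 < lam z)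
    {θ : Rn d} (hθ : θ ∈ Ξ) (hθ1 : ‖θ‖ = 1) :
    ∃ c > 0, ∃ U > 0, ∀ z ∈ Ξ, U ≤ ‖z‖ → c * q ‖z‖ ≤ Q z := by
  have hK : IsCompact (Metric.sphere (0 : Rn d) 1 ∩ Ξ) := (isCompact_sphere _ _).inter_right hcl
  have hsub : Metric.sphere (0 : Rn d) 1 ∩ Ξ ⊆ Ξ := inter_subset_right
  obtain ⟨w0, hw0, hmin⟩ := hK.exists_isMinOn ⟨θ, by simpa using hθ1, hθ⟩ (h.2.2.1.mono hsub)
  have hpos : 0 < lam w0 := hl w0 hw0.2 (by simpa using hw0.1)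
  obtain ⟨U, hU⟩ := eventually_atTop.1 (compact_unif h hK hsub (M := lam w0 / 2)
    (fun w hw => by have : lam w0 ≤ lam w := hmin hw
                    linarith))
  refine ⟨lam w0 / 2, by positivity, max U 1, by positivity, ?_⟩
  intro z hz hzU
  have hz0 : 0 < ‖z‖ := lt_of_lt_of_le one_pos ((le_max_right _ _).trans hzU)
  have h1 : ‖z‖⁻¹ • z ∈ Metric.sphere (0 : Rn d) 1 ∩ Ξ := by
    refine ⟨?_, hcone _ (by positivity) _ hz⟩
    simp [norm_smul, hz0.ne']
  have := hU ‖z‖ ((le_max_left _ _).trans hzU) _ h1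
  rw [smul_smul, mul_inv_cancel₀ hz0.ne', one_smul, lt_div_iff₀ (hq.1 _ hz0)] at this
  exact this.le

lemma inf_lower {d : ℕ} {Ξ : Set (Rn d)} {Q : Rn d → ℝ} {q : ℝ → ℝ} {lam : Rn d → ℝ} {α : ℝ}
    (hα : 0 < α) (hq : RegVary q α) (hcl : IsClosed Ξ) (hcone : IsPosCone Ξ)
    (h : MultiRegVary Ξ Q q lam) (hl : ∀ z ∈ Ξ, ‖z‖ = 1 → 0 < lam z)
    {θ : Rn d} (hθ : θ ∈ Ξ) (hθ1 : ‖θ‖ = 1) {C : Set (Rn d)} (hC : IsClosed C) {M : ℝ}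
    (hM : ∀ w ∈ C ∩ Ξ, M < lam w) :
    ∀ᶠ u : ℝ in atTop, ∀ w ∈ C ∩ Ξ, M * q u ≤ Q (u • w) := by
  obtain ⟨c1, hc1, U1, hU1, H1⟩ := tail_lower hq hcl hcone h hl hθ hθ1
  obtain ⟨c2, hc2, U2, hU2, H2⟩ := potter hα hq (q_unif hα hq hcone h hθ (hl θ hθ hθ1))
  have ht : Tendsto (fun r : ℝ => c1 * (c2 * r ^ (α / 2))) atTop atTop :=
    ((tendsto_rpow_atTop (by linarith : 0 < α / 2)).const_mul_atTop hc2).const_mul_atTop hc1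
  obtain ⟨R, hR⟩ := eventually_atTop.1 ((ht.eventually_ge_atTop M).and (eventually_ge_atTop 1))
  have hcomp : IsCompact (Metric.closedBall (0 : Rn d) R ∩ (C ∩ Ξ)) :=
    (isCompact_closedBall _ _).inter_right (hC.inter hcl)
  filter_upwards [compact_unif h hcomp (fun x hx => hx.2.2) (fun w hw => hM w hw.2),
    eventually_ge_atTop U1, eventually_ge_atTop U2] with u h1 hu1 hu2 w hw
  have hu0 : 0 < u := by linarith
  have hqu := hq.1 u hu0
  by_cases hwR : ‖w‖ ≤ R
  · have := h1 w ⟨by simpa using hwR, hw⟩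
    rw [lt_div_iff₀ hqu] at this
    exact this.le
  · obtain ⟨k1, k2⟩ := hR ‖w‖ (not_le.1 hwR).le
    have hn : ‖u • w‖ = u * ‖w‖ := by rw [norm_smul, Real.norm_of_nonneg hu0.le]
    have k3 := H1 (u • w) (hcone u hu0 _ hw.2) (by rw [hn]; nlinarith)
    rw [hn] at k3
    have k4 := H2 u hu2 ‖w‖ k2
    calc M * q u ≤ c1 * (c2 * ‖w‖ ^ (α / 2)) * q u := by gcongr
      _ = c1 * (c2 * ‖w‖ ^ (α / 2) * q u) := by ring
      _ ≤ c1 * q (u * ‖w‖) := by gcongr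
      _ ≤ _ := k3

lemma q_tendsto {q : ℝ → ℝ} {α : ℝ} (hα : 0 < α) (hq : RegVary q α)
    (hu : ∀ᶠ u : ℝ in atTop, ∀ s ∈ Icc (1:ℝ) 2, 1 / 2 < q (u * s) / q u) :
    ∃ c > 0, ∀ᶠ r : ℝ in atTop, c * r ^ (α / 2) ≤ q r := by
  obtain ⟨c, hc, U, hU, H⟩ := potter hα hq hu
  have hqU := hq.1 U hU
  refine ⟨c * q U * (U⁻¹) ^ (α / 2), by positivity, ?_⟩
  filter_upwards [eventually_ge_atTop U] with r hr
  have := H U le_rfl (r / U) (by rw [ge_iff_le, le_div_iff₀ hU]; linarith)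
  rw [mul_div_cancel₀ _ hU.ne', div_eq_mul_inv,
    Real.mul_rpow (by linarith) (by positivity)] at this
  linarith

lemma integrable_lower {d : ℕ} {Ξ : Set (Rn d)} {Q : Rn d → ℝ} {q : ℝ → ℝ} {lam : Rn d → ℝ}
    {α : ℝ}
    (hα : 0 < α) (hq : RegVary q α) (hcl : IsClosed Ξ) (hcone : IsPosCone Ξ)
    (h : MultiRegVary Ξ Q q lam) (hl : ∀ z ∈ Ξ, ‖z‖ = 1 → 0 < lam z)
    {θ : Rn d} (hθ : θ ∈ Ξ) (hθ1 : ‖θ‖ = 1) {ε : ℝ} (hε : 0 < ε) :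
    ∃ K > 0, ∀ z ∈ Ξ, Real.exp (-(ε * Q z)) ≤ K * (1 + ‖z‖) ^ (-((d : ℝ) + 1)) := by
  obtain ⟨c1, hc1, U1, hU1, H1⟩ := tail_lower hq hcl hcone h hl hθ hθ1
  obtain ⟨c2, hc2, H2⟩ := q_tendsto hα hq (q_unif hα hq hcone h hθ (hl θ hθ hθ1))
  have hd : (0:ℝ) < (d : ℝ) + 1 := by positivity
  have hlo := (isLittleO_log_rpow_atTop (half_pos hα)).bound
    (c := ε * c1 * c2 / (2 ^ (α / 2) * ((d : ℝ) + 1))) (by positivity)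
  have hlo' := (tendsto_atTop_add_const_left atTop (1:ℝ) tendsto_id).eventually hlo
  obtain ⟨R, hR⟩ := eventually_atTop.1 (((H2.and hlo').and (eventually_ge_atTop 1)).and
    (eventually_ge_atTop U1))
  have hR1 := (hR R le_rfl).1.2
  have hK : 1 ≤ (1 + R) ^ ((d : ℝ) + 1) := Real.one_le_rpow (by linarith) hd.le
  refine ⟨(1 + R) ^ ((d : ℝ) + 1), by positivity, ?_⟩
  intro z hz
  have hQ := h.1 z hz
  have hz1 : 0 < 1 + ‖z‖ := by positivity
  by_cases hzR : ‖z‖ ≤ R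
  · calc Real.exp (-(ε * Q z)) ≤ 1 := Real.exp_le_one_iff.2 (by have := mul_nonneg hε.le hQ; linarith)
      _ = (1 + ‖z‖) ^ ((d : ℝ) + 1) * (1 + ‖z‖) ^ (-((d : ℝ) + 1)) := by
        rw [← Real.rpow_add hz1]; simp
      _ ≤ _ := by gcongr
  · obtain ⟨⟨⟨k1, k2⟩, k3⟩, k4⟩ := hR ‖z‖ (not_le.1 hzR).le
    have k5 := H1 z hz k4
    simp only [id] at k2
    rw [Real.norm_of_nonneg (Real.log_nonneg (by linarith)),
      Real.norm_of_nonneg (by positivity)] at k2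
    have k6 : (1 + ‖z‖) ^ (α / 2) ≤ 2 ^ (α / 2) * ‖z‖ ^ (α / 2) := by
      rw [← Real.mul_rpow (by norm_num) (by positivity)]
      exact Real.rpow_le_rpow (by positivity) (by linarith) (by positivity)
    have k7 : ((d : ℝ) + 1) * Real.log (1 + ‖z‖) ≤ ε * Q z := by
      calc ((d : ℝ) + 1) * Real.log (1 + ‖z‖)
          ≤ ((d : ℝ) + 1) * (ε * c1 * c2 / (2 ^ (α / 2) * ((d : ℝ) + 1)) *
            (2 ^ (α / 2) * ‖z‖ ^ (α / 2))) := by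
            gcongr
            exact k2.trans (by gcongr)
        _ = ε * (c1 * (c2 * ‖z‖ ^ (α / 2))) := by field_simp
        _ ≤ ε * (c1 * q ‖z‖) := by gcongr
        _ ≤ _ := by gcongr
    calc Real.exp (-(ε * Q z)) ≤ (1 + ‖z‖) ^ (-((d : ℝ) + 1)) := by
          rw [Real.rpow_def_of_pos hz1, Real.exp_le_exp]; linarith
      _ ≤ _ := le_mul_of_one_le_left (by positivity) hK

lemma main_bound {d : ℕ} {P : Measure (Rn d)} {Ξ : Set (Rn d)} {Q : Rn d → ℝ} {q : ℝ → ℝ}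
    {lam : Rn d → ℝ} {α : ℝ}
    (hP : P = volume.withDensity
      (fun z => ENNReal.ofReal (Ξ.indicator (fun z' => Real.exp (-(Q z'))) z)))
    (hα : 0 < α) (hq : RegVary q α) (hcl : IsClosed Ξ) (hcone : IsPosCone Ξ)
    (h : MultiRegVary Ξ Q q lam) (hl : ∀ z ∈ Ξ, ‖z‖ = 1 → 0 < lam z)
    {θ : Rn d} (hθ : θ ∈ Ξ) (hθ1 : ‖θ‖ = 1) {C : Set (Rn d)} (hC : IsClosed C) {M M1 : ℝ}
    (hM0 : 0 < M) (hMM : M < M1) (hM : ∀ w ∈ C ∩ Ξ, M1 < lam w) :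
    ∀ᶠ u : ℝ in atTop,
      P {z : Rn d | u⁻¹ • z ∈ C} ≤ ENNReal.ofReal (Real.exp (-(M * q u))) := by
  have hM1 : 0 < M1 := hM0.trans hMM
  set ε : ℝ := (M1 - M) / (2 * M1) with hεdef
  have hε : 0 < ε := div_pos (by linarith) (by linarith)
  have hεM : (1 - ε) * M1 = (M + M1) / 2 := by rw [hεdef]; field_simp; ring
  have hε1 : 0 ≤ 1 - ε := by
    by_contra hc
    have := mul_neg_of_neg_of_pos (not_le.1 hc) hM1
    linarith
  obtain ⟨K, hK, HK⟩ := integrable_lower hα hq hcl hcone h hl hθ hθ1 hε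
  have hJfin := finite_integral_one_add_norm (μ := (volume : Measure (Rn d)))
    (r := (d : ℝ) + 1) (by simp)
  set J := ∫⁻ x : Rn d, ENNReal.ofReal ((1 + ‖x‖) ^ (-((d : ℝ) + 1))) with hJ
  obtain ⟨c2, hc2, H2⟩ := q_tendsto hα hq (q_unif hα hq hcone h hθ (hl θ hθ hθ1))
  have hqt : Tendsto q atTop atTop := tendsto_atTop_mono' _ H2
    ((tendsto_rpow_atTop (half_pos hα)).const_mul_atTop hc2)
  have hbig : Tendsto (fun u => Real.exp ((M1 - M) / 2 * q u)) atTop atTop :=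
    Real.tendsto_exp_atTop.comp (hqt.const_mul_atTop (by linarith))
  filter_upwards [inf_lower hα hq hcl hcone h hl hθ hθ1 hC hM, eventually_gt_atTop 0,
    hbig.eventually_ge_atTop (K * J.toReal)] with u h1 hu h2
  have hmeas : MeasurableSet {z : Rn d | u⁻¹ • z ∈ C} :=
    (hC.preimage (continuous_const_smul u⁻¹)).measurableSet
  rw [hP, withDensity_apply _ hmeas]
  calc _ ≤ ∫⁻ z in {z : Rn d | u⁻¹ • z ∈ C}, ENNReal.ofReal (Real.exp (-((M + M1) / 2 * q u)) * K) *
          ENNReal.ofReal ((1 + ‖z‖) ^ (-((d : ℝ) + 1))) := by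
        refine setLIntegral_mono' hmeas ?_
        intro z hz
        rw [← ENNReal.ofReal_mul (by positivity)]
        apply ENNReal.ofReal_le_ofReal
        by_cases hzΞ : z ∈ Ξ
        · rw [indicator_of_mem hzΞ]
          have k1 := h1 (u⁻¹ • z) ⟨hz, hcone _ (by positivity) _ hzΞ⟩
          rw [smul_smul, mul_inv_cancel₀ hu.ne', one_smul] at k1
          have k2 := HK z hzΞ
          have k3 : (M + M1) / 2 * q u ≤ (1 - ε) * Q z := by
            rw [← hεM, mul_assoc]; gcongr
          calc Real.exp (-(Q z)) = Real.exp (-((1 - ε) * Q z)) * Real.exp (-(ε * Q z)) := by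
                rw [← Real.exp_add]; congr 1; ring
            _ ≤ Real.exp (-((M + M1) / 2 * q u)) * (K * (1 + ‖z‖) ^ (-((d : ℝ) + 1))) := by
                gcongr
            _ = _ := by ring
        · rw [indicator_of_notMem hzΞ]; positivity
    _ ≤ ∫⁻ z : Rn d, ENNReal.ofReal (Real.exp (-((M + M1) / 2 * q u)) * K) *
          ENNReal.ofReal ((1 + ‖z‖) ^ (-((d : ℝ) + 1))) := setLIntegral_le_lintegral _ _
    _ = ENNReal.ofReal (Real.exp (-((M + M1) / 2 * q u)) * K) * J := by
        rw [lintegral_const_mul _ (by fun_prop)]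
    _ = ENNReal.ofReal (Real.exp (-((M + M1) / 2 * q u)) * (K * J.toReal)) := by
        rw [← ENNReal.ofReal_toReal hJfin.ne, ← ENNReal.ofReal_mul (by positivity),
          ENNReal.toReal_ofReal ENNReal.toReal_nonneg, mul_assoc]
    _ ≤ _ := by
        apply ENNReal.ofReal_le_ofReal
        calc _ ≤ Real.exp (-((M + M1) / 2 * q u)) * Real.exp ((M1 - M) / 2 * q u) := by gcongr
          _ = _ := by rw [← Real.exp_add]; congr 1; ring

lemma exists_unit_or {d : ℕ} {P : Measure (Rn d)} {Ξ : Set (Rn d)} {Q : Rn d → ℝ}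
    (hP : P = volume.withDensity
      (fun z => ENNReal.ofReal (Ξ.indicator (fun z' => Real.exp (-(Q z'))) z)))
    (hne : Ξ.Nonempty) (hcone : IsPosCone Ξ) (h1 : P Ξ = 1) :
    (∃ θ ∈ Ξ, ‖θ‖ = 1) ∨ (Ξ = {0} ∧ Q 0 = 0) := by
  by_cases hz : ∃ z ∈ Ξ, z ≠ 0
  · left
    obtain ⟨z, hz, hz0⟩ := hz
    have : 0 < ‖z‖ := norm_pos_iff.2 hz0
    exact ⟨‖z‖⁻¹ • z, hcone _ (by positivity) _ hz, by simp [norm_smul, this.ne']⟩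
  · right
    push Not at hz
    have hΞ : Ξ = {0} := by
      ext x
      constructor
      · exact hz x
      · rintro rfl
        obtain ⟨y, hy⟩ := hne
        exact hz y hy ▸ hy
    refine ⟨hΞ, ?_⟩
    rw [hP, hΞ, withDensity_apply _ (measurableSet_singleton 0)] at h1
    rw [lintegral_singleton] at h1
    simp only [mem_singleton_iff, indicator_of_mem] at h1
    rcases Nat.eq_zero_or_pos d with rfl | hd
    · rw [volume_euclideanSpace_eq_dirac] at h1
      simp at h1
      exact h1
    · have : Nonempty (Fin d) := ⟨⟨0, hd⟩⟩
      simp at h1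

/-- Primitive large deviation upper bound: for every closed set `C`,
`limsup_{u→∞} log P(z/u ∈ C) / q(u) ≤ −inf{lam(w) : w ∈ C ∩ Ξ}`
(in `EReal`, with `log 0 = ⊥` and `inf ∅ = ⊤`). -/
theorem primitive_ldp_upper {d : ℕ} (P : Measure (Rn d)) (Ξ : Set (Rn d))
    (Q : Rn d → ℝ) (q : ℝ → ℝ) (lam : Rn d → ℝ) (α : ℝ)
    (hA1 : Assumption1 P Ξ Q q lam α)
    (C : Set (Rn d)) (hC : IsClosed C) :
    Filter.limsup
        (fun u : ℝ => ENNReal.log (P {z : Rn d | u⁻¹ • z ∈ C}) / ((q u : ℝ) : EReal))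
        atTop
      ≤ - ⨅ w ∈ C ∩ Ξ, (lam w : EReal) := by
  obtain ⟨hprob, hne, hcl, hcone, hPΞ, -, hP, hα, hq, h, hl⟩ := hA1
  have hdiv : ∀ u : ℝ, 0 < u → ∀ x : ℝ,
      P {z : Rn d | u⁻¹ • z ∈ C} ≤ ENNReal.ofReal (Real.exp (-(x * q u))) →
      ENNReal.log (P {z : Rn d | u⁻¹ • z ∈ C}) / ((q u : ℝ) : EReal) ≤ ((-x : ℝ) : EReal) := by
    intro u hu x hx
    rw [EReal.div_le_iff_le_mul (by exact_mod_cast hq.1 u hu) (EReal.coe_ne_top _)]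
    refine (ENNReal.log_monotone hx).trans ?_
    rw [ENNReal.log_ofReal_of_pos (Real.exp_pos _), Real.log_exp, ← EReal.coe_mul,
      EReal.coe_le_coe_iff]
    linarith
  have hle0 : Filter.limsup
        (fun u : ℝ => ENNReal.log (P {z : Rn d | u⁻¹ • z ∈ C}) / ((q u : ℝ) : EReal))
        atTop ≤ 0 := by
    refine limsup_le_of_le (h := ?_)
    filter_upwards [eventually_gt_atTop 0] with u hu
    have := hdiv u hu 0 (by simpa using prob_le_one)
    simpa using this
  rw [EReal.le_neg]
  refine EReal.ge_of_forall_gt_iff_ge.1 ?_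
  intro M hM
  rw [EReal.le_neg]
  by_cases hM0 : M ≤ 0
  · refine hle0.trans ?_
    rw [← EReal.coe_neg]
    exact_mod_cast neg_nonneg.2 hM0
  push Not at hM0
  obtain ⟨M1, hMM, hM1⟩ := EReal.lt_iff_exists_real_btwn.1 hM
  have hMM' : M < M1 := by exact_mod_cast hMM
  have hlam : ∀ w ∈ C ∩ Ξ, M1 < lam w := by
    intro w hw
    have : (M1 : EReal) < (lam w : EReal) := lt_of_lt_of_le hM1 (iInf₂_le w hw)
    exact_mod_cast this
  rw [← EReal.coe_neg]
  refine limsup_le_of_le (h := ?_)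
  rcases exists_unit_or hP hne hcone hPΞ with ⟨θ, hθ, hθ1⟩ | ⟨hΞ, hQ⟩
  · filter_upwards [main_bound hP hα hq hcl hcone h hl hθ hθ1 hC hM0 hMM' hlam,
      eventually_gt_atTop 0] with u hu hu0
    exact hdiv u hu0 M hu
  · have h0 : (0 : Rn d) ∈ Ξ := by simp [hΞ]
    have hlam0 : lam 0 = 0 := by
      have := h.2.2.2 0 h0 (fun _ => 0) (fun _ _ => h0) tendsto_const_nhds
      simp only [smul_zero, hQ, zero_div] at this
      exact tendsto_nhds_unique this tendsto_const_nhds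
    have h0C : (0 : Rn d) ∉ C := by
      intro hc
      have := hlam 0 ⟨hc, h0⟩
      linarith
    filter_upwards [eventually_gt_atTop 0] with u hu0
    refine hdiv u hu0 M ?_
    have hz : P {z : Rn d | u⁻¹ • z ∈ C} = 0 := by
      refine measure_mono_null (t := Ξᶜ) ?_ ((prob_compl_eq_zero_iff hcl.measurableSet).2 hPΞ)
      intro z hz hzΞ
      rw [hΞ, mem_singleton_iff] at hzΞ
      rw [hzΞ] at hz
      exact h0C (by simpa using hz)
    rw [hz]
    exact zero_le
end
end

section
/- Suppose Assumption 2 holds for X ⊆ ℝ^n, Ξ ⊆ ℝ^m, g : X × Ξ → ℝ, exponents (γ, ρ), and limit function g*. Then g* is homogeneous in the following sense: for every y ∈ X^∞_γ, every w ∈ Ξ, and every t > 0, one has t^γ y ∈ X^∞_γ, t w ∈ Ξ, and g*(t^γ y, t w) = t^ρ g*(y, w). -/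
open Filter Topology MeasureTheory Set

noncomputable section

theorem approx_pos {n : ℕ} (X : Set (Rn n)) (γ : ℝ) (hγ : 0 < γ) (hX : Convex ℝ X)
    (y : Rn n) (hy : y ∈ asymCone X γ) (ε : ℝ) (hε : 0 < ε) :
    ∀ᶠ u : ℝ in atTop, ∃ x ∈ X, ‖(u ^ γ)⁻¹ • x - y‖ < ε := by
  obtain ⟨a, l, ha, hl, hlt, hlim⟩ := hy
  have h1 : Tendsto (fun u : ℝ => (u ^ γ)⁻¹ * ‖a 0‖) atTop (𝓝 0) := by
    simpa using (tendsto_inv_atTop_zero.comp (tendsto_rpow_atTop hγ)).mul_const ‖a 0‖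
  filter_upwards [h1.eventually (gt_mem_nhds (by positivity : (0 : ℝ) < ε / 3)),
    eventually_gt_atTop 0] with u hu hu0
  have h2 := (tendsto_iff_norm_sub_tendsto_zero.1 hlim).eventually
    (gt_mem_nhds (by positivity : (0 : ℝ) < ε / 3))
  obtain ⟨k, hk, hku⟩ := (h2.and (hlt.eventually_ge_atTop u)).exists
  have hup : 0 < u ^ γ := Real.rpow_pos_of_pos hu0 γ
  have hlp : 0 < l k ^ γ := Real.rpow_pos_of_pos (hl k) γ
  have hle : u ^ γ ≤ l k ^ γ := Real.rpow_le_rpow hu0.le hku hγ.le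
  refine ⟨(1 - u ^ γ / l k ^ γ) • a 0 + (u ^ γ / l k ^ γ) • a k,
    hX (ha 0) (ha k) ?_ (by positivity) (by ring), ?_⟩
  · rw [sub_nonneg]; exact (div_le_one hlp).2 hle
  have e : (u ^ γ)⁻¹ • ((1 - u ^ γ / l k ^ γ) • a 0 + (u ^ γ / l k ^ γ) • a k) - y
      = (u ^ γ)⁻¹ • a 0 - (l k ^ γ)⁻¹ • a 0 + ((l k ^ γ)⁻¹ • a k - y) := by
    rw [smul_add, smul_smul, smul_smul, ← sub_smul, add_sub_assoc]
    congr 3 <;> field_simp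
  rw [e]
  have n1 : ‖(u ^ γ)⁻¹ • a 0‖ = (u ^ γ)⁻¹ * ‖a 0‖ := by
    rw [norm_smul, Real.norm_of_nonneg (by positivity)]
  have n2 : ‖(l k ^ γ)⁻¹ • a 0‖ ≤ (u ^ γ)⁻¹ * ‖a 0‖ := by
    rw [norm_smul, Real.norm_of_nonneg (by positivity)]
    gcongr
  have := norm_add_le ((u ^ γ)⁻¹ • a 0 - (l k ^ γ)⁻¹ • a 0) ((l k ^ γ)⁻¹ • a k - y)
  have := norm_sub_le ((u ^ γ)⁻¹ • a 0) ((l k ^ γ)⁻¹ • a 0)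
  linarith

theorem approx_neg {n : ℕ} (X : Set (Rn n)) (γ : ℝ) (hγ : γ < 0) (hX : Convex ℝ X)
    (hc : IsClosed X)
    (y : Rn n) (hy : y ∈ asymCone X γ) (ε : ℝ) (hε : 0 < ε) :
    ∀ᶠ u : ℝ in atTop, ∃ x ∈ X, ‖(u ^ γ)⁻¹ • x - y‖ < ε := by
  obtain ⟨a, l, ha, hl, hlt, hlim⟩ := hy
  have h0 : (0 : Rn n) ∈ X := by
    have h1 : Tendsto (fun k => l k ^ γ) atTop (𝓝 0) := by
      have := (tendsto_rpow_neg_atTop (neg_pos.2 hγ)).comp hlt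
      simpa [Function.comp_def] using this
    have h2 := h1.smul hlim
    rw [zero_smul] at h2
    refine hc.mem_of_tendsto h2 (Eventually.of_forall fun k => ?_)
    have hlp : 0 < l k ^ γ := Real.rpow_pos_of_pos (hl k) γ
    simp only [smul_smul]
    rw [mul_inv_cancel₀ hlp.ne', one_smul]
    exact ha k
  have h2 := (tendsto_iff_norm_sub_tendsto_zero.1 hlim).eventually (gt_mem_nhds hε)
  obtain ⟨k, hk⟩ := h2.exists
  filter_upwards [eventually_ge_atTop (l k)] with u hu
  have hu0 : 0 < u := (hl k).trans_le hu
  have hup : 0 < u ^ γ := Real.rpow_pos_of_pos hu0 γ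
  have hlp : 0 < l k ^ γ := Real.rpow_pos_of_pos (hl k) γ
  have hle : u ^ γ ≤ l k ^ γ := Real.rpow_le_rpow_of_nonpos (hl k) hu hγ.le
  refine ⟨(1 - u ^ γ / l k ^ γ) • (0 : Rn n) + (u ^ γ / l k ^ γ) • a k,
    hX h0 (ha k) ?_ (by positivity) (by ring), ?_⟩
  · rw [sub_nonneg]; exact (div_le_one hlp).2 hle
  have e : (u ^ γ)⁻¹ * (u ^ γ / l k ^ γ) = (l k ^ γ)⁻¹ := by field_simp
  rw [smul_zero, zero_add, smul_smul, e]
  exact hk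

theorem exists_family {n : ℕ} (X : Set (Rn n)) (γ : ℝ) (hγ : γ ≠ 0) (hX : Convex ℝ X)
    (hc : IsClosed X) (hne : X.Nonempty) (y : Rn n) (hy : y ∈ asymCone X γ) :
    ∃ x : ℝ → Rn n, (∀ u, x u ∈ X) ∧
      Tendsto (fun u : ℝ => (u ^ γ)⁻¹ • x u) atTop (𝓝 y) := by
  choose x hx hd using fun u : ℝ => hc.exists_infDist_eq_dist hne ((u ^ γ) • y)
  refine ⟨x, hx, ?_⟩
  rw [Metric.tendsto_nhds]
  intro ε hε
  have h : ∀ᶠ u : ℝ in atTop, ∃ x ∈ X, ‖(u ^ γ)⁻¹ • x - y‖ < ε := by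
    rcases lt_or_gt_of_ne hγ with h | h
    · exact approx_neg X γ h hX hc y hy ε hε
    · exact approx_pos X γ h hX y hy ε hε
  filter_upwards [h, eventually_gt_atTop 0] with u ⟨p, hp, hpe⟩ hu0
  have hup : 0 < u ^ γ := Real.rpow_pos_of_pos hu0 γ
  have key : ∀ q : Rn n, ‖(u ^ γ)⁻¹ • q - y‖ = (u ^ γ)⁻¹ * dist ((u ^ γ) • y) q := by
    intro q
    have e : (u ^ γ)⁻¹ • q - y = (u ^ γ)⁻¹ • (q - (u ^ γ) • y) := by
      rw [smul_sub, smul_smul, inv_mul_cancel₀ hup.ne', one_smul]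
    rw [e, norm_smul, Real.norm_of_nonneg (by positivity), dist_comm, dist_eq_norm]
  rw [dist_eq_norm]
  refine lt_of_le_of_lt ?_ hpe
  rw [key, key, ← hd u]
  gcongr
  exact Metric.infDist_le_dist_of_mem hp

/-- Under Assumption 2, the limit function `gs` is homogeneous:
`gs(t^γ y, t w) = t^ρ gs(y, w)` for `t > 0`, and the scaled arguments stay in
`X^∞_γ` and `Ξ` respectively. -/
theorem gstar_homogeneous {n m : ℕ} (X : Set (Rn n)) (Ξ : Set (Rn m))
    (g : Rn n → Rn m → ℝ) (γ ρ : ℝ) (gs : Rn n → Rn m → ℝ)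
    (hA2 : Assumption2 X Ξ g γ ρ gs) :
    ∀ y ∈ asymCone X γ, ∀ w ∈ Ξ, ∀ t : ℝ, 0 < t →
      (t ^ γ) • y ∈ asymCone X γ ∧ t • w ∈ Ξ ∧
      gs ((t ^ γ) • y) (t • w) = (t ^ ρ) * gs y w := by
  intro y hy w hw t ht
  obtain ⟨⟨hne, hc, hX, -, -, hcone, -⟩, hγ, -, ⟨-, hA1⟩, -⟩ := hA2
  have htw : t • w ∈ Ξ := hcone t ht w hw
  have hty : (t ^ γ) • y ∈ asymCone X γ := by
    obtain ⟨a, l, ha, hl, hlt, hlim⟩ := hy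
    refine ⟨a, fun k => l k / t, ha, fun k => div_pos (hl k) ht,
      hlt.atTop_div_const ht, ?_⟩
    refine (hlim.const_smul (t ^ γ)).congr fun k => ?_
    rw [smul_smul, Real.div_rpow (hl k).le ht.le, inv_div, div_eq_mul_inv]
  refine ⟨hty, htw, ?_⟩
  obtain ⟨x, hx, hlim⟩ := exists_family X γ hγ hX hc hne y hy
  have hz : Tendsto (fun u : ℝ => u⁻¹ • (u • w)) atTop (𝓝 w) := by
    refine tendsto_const_nhds.congr' ?_
    filter_upwards [eventually_gt_atTop 0] with u hu
    rw [smul_smul, inv_mul_cancel₀ hu.ne', one_smul]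
  have h1 := hA1 y hy w hw x (fun u => u • w) (fun u _ => hx u)
    (fun u hu => hcone u hu w hw) hlim hz
  have hT : Tendsto (fun u : ℝ => t * u) atTop atTop := tendsto_id.const_mul_atTop ht
  have h2 := hA1 _ hty _ htw (fun u => x (t * u)) (fun u => (t * u) • w) (fun u _ => hx _)
    (fun u hu => hcone _ (mul_pos ht hu) w hw) ?_ ?_
  · have h3 := (h1.comp hT).const_mul (t ^ ρ)
    refine tendsto_nhds_unique h2 (h3.congr' ?_)
    filter_upwards [eventually_gt_atTop 0] with u hu
    have hup : 0 < u ^ ρ := Real.rpow_pos_of_pos hu ρ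
    have htp : 0 < t ^ ρ := Real.rpow_pos_of_pos ht ρ
    simp only [Function.comp_apply]
    rw [Real.mul_rpow ht.le hu.le]
    field_simp
  · refine ((hlim.comp hT).const_smul (t ^ γ)).congr' ?_
    filter_upwards [eventually_gt_atTop 0] with u hu
    have htp : 0 < t ^ γ := Real.rpow_pos_of_pos ht γ
    simp only [Function.comp_apply]
    rw [smul_smul, Real.mul_rpow ht.le hu.le, mul_inv, ← mul_assoc,
      mul_inv_cancel₀ htp.ne', one_mul]
  · refine tendsto_const_nhds.congr' ?_
    filter_upwards [eventually_gt_atTop 0] with u hu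
    rw [smul_smul]
    congr 1
    field_simp
end
end
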